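/- For every integer n ≥ 1, every skew shape λ/μ, every N ≥ 1, and with q a formal variable, the ribbon function 𝒢_{λ/μ}(x_1,…,x_N;q) is a symmetric polynomial in x_1,…,x_N, i.e. it is invariant under every permutation of the variables x_1,…,x_N. -/

import Mathlib

/-!
A ribbon tableau is a chain of horizontal ribbon strips, so the ribbon function is an entry of a
product `A(x₁) ⋯ A(x_N)` of transfer matrices, where the entry of `A(x)` at `(μ, ν)` is the sum of
`q ^ spin * x ^ (number of ribbons)` over the horizontal `n`-ribbon strips of shape `ν/μ`
(`F_eq_prod`). Symmetry follows once the matrices `A(x)` and `A(y)` commute (`A_commute`).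

A Young diagram `μ` is encoded by the function `hgt μ`, which to a content `k` attaches the row of
the first cell of the diagonal `k` outside `μ`; from one diagonal to the next it is constant or
drops by one, which gives a sequence of bits `mb μ`. A horizontal `n`-ribbon strip of shape `ν/μ` is
the same as a finite set `P` of contents, those of the south-west ends (tails) of its ribbons, such
that `hgt ν` exceeds `hgt μ` by the number of ribbons covering a diagonal, and `hgt μ` does not drop
just after the last diagonal of a ribbon (`Valid`). In terms of bits, both the condition and the
spin are local: they are expressed through the bits at a site and the window of the `n` sites
before it.

Hence the pairs of successive strips `μ ⊆ ν ⊆ κ`, with weights `x` and `y`, are the configurations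
of a two-row vertex model on the line of contents; the state of a site is a pair of bits recording
whether each of the two strips has a tail there, and the bits of `ν` are forced by those of `μ` and
the states. Its partition function `Zrec` is computed site by site from the window of the last `n`
states. The symmetry of `Zrec` in `x` and `y` is an argument of Yang-Baxter type: a kernel `ker`
acting on functions of the window, a weighted sum over the ways to move tails from the second strip
to the first one, intertwines (up to a power of `q`) the step with parameters `(x, y)` and the step
with parameters `(y, x)` (`Zrec_intertwine`). The kernel is trivial on a window without tails, so
for such a window at the left end the two partition functions agree (`Zrec_symm`). Since the kernel
involves `y / x` and `q⁻¹`, this takes place over a field (`W_comm_field`), and the commutation of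
the polynomial matrices is deduced in the field of fractions.
-/

open scoped Classical

noncomputable section

/-- A cell of a Young/skew diagram: (row, column). -/
abbrev Cell : Type := ℕ × ℕ

/-- Two cells are adjacent if they share an edge. -/
def Adj (a b : Cell) : Prop :=
  (a.1 = b.1 ∧ (a.2 + 1 = b.2 ∨ b.2 + 1 = a.2)) ∨
  (a.2 = b.2 ∧ (a.1 + 1 = b.1 ∨ b.1 + 1 = a.1))

/-- Reachability inside a finite set of cells via edge-adjacency. -/
def Reach (S : Finset Cell) (a b : Cell) : Prop :=
  Relation.ReflTransGen (fun x y => y ∈ S ∧ Adj x y) a b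

/-- A set of cells is connected if any two of its cells are joined by a path inside it. -/
def CellsConnected (S : Finset Cell) : Prop :=
  ∀ a ∈ S, ∀ b ∈ S, Reach S a b

/-- The connected component of the cell `c` inside `S`. -/
def component (S : Finset Cell) (c : Cell) : Finset Cell :=
  S.filter (fun d => Reach S c d)

/-- The number of connected components of a set of cells. -/
def numComponents (S : Finset Cell) : ℕ :=
  (S.image (fun c => component S c)).card

/-- `S` contains no 2 × 2 square of cells. -/
def NoSquare (S : Finset Cell) : Prop :=
  ¬ ∃ i j : ℕ, (i, j) ∈ S ∧ (i + 1, j) ∈ S ∧ (i, j + 1) ∈ S ∧ (i + 1, j + 1) ∈ S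

/-- `S` is (the set of cells of) a skew shape `λ/μ`. -/
def IsSkewCells (S : Finset Cell) : Prop :=
  ∃ lam mu : YoungDiagram, mu ≤ lam ∧ S = lam.cells \ mu.cells

/-- An `n`-ribbon: a connected skew shape with `n` cells and no 2 × 2 square. -/
def IsRibbon (n : ℕ) (S : Finset Cell) : Prop :=
  S.card = n ∧ CellsConnected S ∧ NoSquare S ∧ IsSkewCells S

/-- The spin of a ribbon: the number of rows it occupies, minus 1. -/
def ribbonSpin (S : Finset Cell) : ℕ := (S.image Prod.fst).card - 1

/-- `T` is a tiling of the cell set `S` by `n`-ribbons. -/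
def IsTilingOf (n : ℕ) (S : Finset Cell) (T : Finset (Finset Cell)) : Prop :=
  (∀ R ∈ T, IsRibbon n R) ∧
  ((T : Set (Finset Cell)).Pairwise fun A B => Disjoint A B) ∧
  T.biUnion id = S

/-- `S` can be tiled by `n`-ribbons. -/
def Tileable (n : ℕ) (S : Finset Cell) : Prop := ∃ T, IsTilingOf n S T

/-- Total spin of a tiling. -/
def tilingSpin (T : Finset (Finset Cell)) : ℕ := ∑ R ∈ T, ribbonSpin R

/-- The maximum spin of an `n`-ribbon tiling of `S`. -/
def maxSpin (n : ℕ) (S : Finset Cell) : ℕ :=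
  sSup {m : ℕ | ∃ T, IsTilingOf n S T ∧ tilingSpin T = m}

/-- `c` is the topright-most cell of `R`: maximal column and, among those, minimal row. -/
def TopRightCell (R : Finset Cell) (c : Cell) : Prop :=
  c ∈ R ∧ ∀ d ∈ R, d.2 ≤ c.2 ∧ (d.2 = c.2 → c.1 ≤ d.1)

/-- Every ribbon of the tiling `T` has its topright-most cell touching the northern
edge of the shape `S`: the cell directly above it is not in `S`. -/
def NorthernCond (S : Finset Cell) (T : Finset (Finset Cell)) : Prop :=
  ∀ R ∈ T, ∀ c : Cell, TopRightCell R c → (c.1 = 0 ∨ (c.1 - 1, c.2) ∉ S)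

/-- `T` is a tiling of `S` witnessing that `S` is a horizontal `n`-ribbon strip. -/
def IsHStripTiling (n : ℕ) (S : Finset Cell) (T : Finset (Finset Cell)) : Prop :=
  IsTilingOf n S T ∧ NorthernCond S T

/-- `S` is a horizontal `n`-ribbon strip. -/
def IsHStripCells (n : ℕ) (S : Finset Cell) : Prop :=
  IsSkewCells S ∧ ∃ T, IsHStripTiling n S T

/-- The spin of a horizontal `n`-ribbon strip (via its tiling, which is unique when it exists). -/
def stripSpin (n : ℕ) (S : Finset Cell) : ℕ :=
  if h : ∃ T, IsHStripTiling n S T then tilingSpin h.choose else 0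

/-- Conjugate (transpose) of a set of cells. -/
def swapCells (S : Finset Cell) : Finset Cell := S.image Prod.swap

/-- `S` is a vertical `n`-ribbon strip: its conjugate is a horizontal one. -/
def IsVStripCells (n : ℕ) (S : Finset Cell) : Prop :=
  IsHStripCells n (swapCells S)

/-- The spin of a vertical `n`-ribbon strip with `k = |S|/n` ribbons:
`k (n-1)` minus the spin of the conjugate strip. -/
def vStripSpin (n : ℕ) (S : Finset Cell) : ℕ :=
  (S.card / n) * (n - 1) - stripSpin n (swapCells S)

/-- `T` is a tiling of `S` witnessing that `S` is a vertical `n`-ribbon strip. -/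
def IsVStripTiling (n : ℕ) (S : Finset Cell) (T : Finset (Finset Cell)) : Prop :=
  IsHStripTiling n (swapCells S) (T.image swapCells)

/-- `mu` is obtained from `lam` by removing a single `n`-ribbon. -/
def RibbonStep (n : ℕ) (lam mu : YoungDiagram) : Prop :=
  mu ≤ lam ∧ IsRibbon n (lam.cells \ mu.cells)

/-- `delta` is the `n`-core of `lam`: it is obtained from `lam` by successively removing
`n`-ribbons, and no further `n`-ribbon can be removed from it. -/
def IsNCoreOf (n : ℕ) (delta lam : YoungDiagram) : Prop :=
  Relation.ReflTransGen (RibbonStep n) lam delta ∧ ∀ mu, ¬ RibbonStep n delta mu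

/-- The `n`-core of a partition (defined via choice; it exists and is unique). -/
def nCore (n : ℕ) (lam : YoungDiagram) : YoungDiagram :=
  if h : ∃ d, IsNCoreOf n d lam then h.choose else lam

/-- A semistandard `n`-ribbon tableau of shape `lam/mu` with entries in `{1, …, N}`:
a chain of partitions `mu = μ⁰ ⊆ μ¹ ⊆ ⋯ ⊆ μᴺ = lam` where each `μⁱ/μ^{i-1}` is a (possibly
empty) horizontal `n`-ribbon strip, together with the (unique) tiling of each strip. -/
structure RibbonTableau (n N : ℕ) (lam mu : YoungDiagram) where
  chain : Fin (N + 1) → YoungDiagram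
  chain_zero : chain 0 = mu
  chain_last : chain (Fin.last N) = lam
  chain_mono : ∀ i : Fin N, chain i.castSucc ≤ chain i.succ
  tiling : Fin N → Finset (Finset Cell)
  tiling_strip : ∀ i : Fin N,
    IsHStripTiling n ((chain i.succ).cells \ (chain i.castSucc).cells) (tiling i)

/-- The spin of a ribbon tableau. -/
def RibbonTableau.spin {n N : ℕ} {lam mu : YoungDiagram} (T : RibbonTableau n N lam mu) : ℕ :=
  ∑ i : Fin N, tilingSpin (T.tiling i)

/-- A standard ribbon tableau: each letter occurs exactly once. -/
def RibbonTableau.IsStandard {n N : ℕ} {lam mu : YoungDiagram}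
    (T : RibbonTableau n N lam mu) : Prop :=
  ∀ i : Fin N, (T.tiling i).card = 1

/-- The monomial `q^{spin T} x^{weight T}` attached to a ribbon tableau. -/
def tableauTerm {n N : ℕ} {lam mu : YoungDiagram} (T : RibbonTableau n N lam mu) :
    MvPolynomial (Fin N) (Polynomial ℤ) :=
  MvPolynomial.C (Polynomial.X ^ T.spin) *
    ∏ i : Fin N, MvPolynomial.X i ^ (T.tiling i).card

/-- The ribbon function `𝒢_{lam/mu}(x₁, …, x_N; q)`. -/
def ribbonFn (n N : ℕ) (lam mu : YoungDiagram) : MvPolynomial (Fin N) (Polynomial ℤ) :=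
  ∑ᶠ T : RibbonTableau n N lam mu, tableauTerm T

/-- `𝒢_lam = 𝒢_{lam/(n-core of lam)}`. -/
def G (n N : ℕ) (lam : YoungDiagram) : MvPolynomial (Fin N) (Polynomial ℤ) :=
  ribbonFn n N lam (nCore n lam)

/-- The Schur polynomial `s_ν(x₁,…,x_N)`, realized as the `n = 1` ribbon function
(1-ribbon tableaux are exactly semistandard Young tableaux, and all spins are 0). -/
def schurPoly (N : ℕ) (nu : YoungDiagram) : MvPolynomial (Fin N) (Polynomial ℤ) :=
  ribbonFn 1 N nu ⊥

/-- The cells of the `i`-th horizontal strip of a decomposition. -/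
def stripCells {len : ℕ} (strip : Fin len → Finset (Finset Cell)) (i : Fin len) : Finset Cell :=
  (strip i).biUnion id

/-- The cells of `lam` together with the strips up to (and including) `i`. -/
def partialCells {len : ℕ} (strip : Fin len → Finset (Finset Cell)) (lam : YoungDiagram)
    (i : Fin len) : Finset Cell :=
  lam.cells ∪ (Finset.univ.filter (fun j => j ≤ i)).biUnion (fun j => stripCells strip j)

/-- The union of the cells of the strips strictly before `i`. -/
def prevCells {len : ℕ} (strip : Fin len → Finset (Finset Cell)) (i : Fin len) : Finset Cell :=
  (Finset.univ.filter (fun j => j < i)).biUnion (fun j => stripCells strip j)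

/-- Two cell sets touch if some cell of one is adjacent to some cell of the other. -/
def Touches (A B : Finset Cell) : Prop :=
  ∃ a ∈ A, ∃ b ∈ B, Adj a b

/-- `R` is the rightmost ribbon within the cell set `C`. -/
def IsRightmostIn (R C : Finset Cell) : Prop :=
  ∃ c ∈ R, ∀ d ∈ C, d.2 ≤ c.2

/-- A border `n`-ribbon strip of shape `mu/lam`: the connected skew shape `mu/lam` with a
distinguished decomposition into disjoint non-empty horizontal `n`-ribbon strips
`T₁, …, T_len` (each recorded by its tiling) such that each partial union is a skew shape,
`T₁` is connected, and for `i ≥ 2` every connected component `C` of `Tᵢ` is such that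
`C ∪ (T₁ ∪ ⋯ ∪ T_{i-1})` is not a horizontal `n`-ribbon strip and only the rightmost
ribbon of `C` touches `T₁ ∪ ⋯ ∪ T_{i-1}`. -/
structure BorderRibbonStrip (n : ℕ) (lam mu : YoungDiagram) where
  len : ℕ
  len_pos : 1 ≤ len
  strip : Fin len → Finset (Finset Cell)
  sub : lam ≤ mu
  connected : CellsConnected (mu.cells \ lam.cells)
  nonempty : ∀ i, (strip i).Nonempty
  disj : ∀ i j, i ≠ j → Disjoint (stripCells strip i) (stripCells strip j)
  cover : Finset.univ.biUnion (fun i => stripCells strip i) = mu.cells \ lam.cells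
  shape : ∀ i, ∃ nu : YoungDiagram, nu.cells = partialCells strip lam i
  hstrips : ∀ i, IsHStripTiling n (stripCells strip i) (strip i)
  first_connected : CellsConnected (stripCells strip ⟨0, len_pos⟩)
  comp_cond : ∀ i : Fin len, 0 < (i : ℕ) → ∀ c ∈ stripCells strip i,
    (¬ IsHStripCells n (component (stripCells strip i) c ∪ prevCells strip i)) ∧
    (∀ R ∈ strip i, R ⊆ component (stripCells strip i) c →
      Touches R (prevCells strip i) → IsRightmostIn R (component (stripCells strip i) c))

/-- The height of a border ribbon strip: total number of connected components of its
horizontal strips, minus 1. -/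
def BorderRibbonStrip.height {n : ℕ} {lam mu : YoungDiagram}
    (S : BorderRibbonStrip n lam mu) : ℕ :=
  (∑ i : Fin S.len, numComponents (stripCells S.strip i)) - 1

/-- The spin of a border ribbon strip. -/
def BorderRibbonStrip.spin {n : ℕ} {lam mu : YoungDiagram}
    (S : BorderRibbonStrip n lam mu) : ℕ :=
  ∑ i : Fin S.len, tilingSpin (S.strip i)

/-- The size (number of ribbons) of a border ribbon strip. -/
def BorderRibbonStrip.size {n : ℕ} {lam mu : YoungDiagram}
    (S : BorderRibbonStrip n lam mu) : ℕ :=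
  ∑ i : Fin S.len, (S.strip i).card

/-- `𝒳^{mu/lam}_k(q) = Σ_S (-1)^{h(S)} q^{s(S)}` over border `n`-ribbon strips of shape
`mu/lam` with `k` ribbons. -/
def chiX (n k : ℕ) (lam mu : YoungDiagram) : Polynomial ℤ :=
  ∑ᶠ S : BorderRibbonStrip n lam mu,
    if S.size = k then (-1) ^ S.height * Polynomial.X ^ S.spin else 0

/-- The complete homogeneous symmetric polynomial of degree `k` evaluated at the family `v`. -/
def hPoly {ι R : Type*} [Fintype ι] [DecidableEq ι] [CommSemiring R] (k : ℕ) (v : ι → R) : R :=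
  ∑ d : Sym ι k, ((d : Multiset ι).map v).prod

/-- The elementary symmetric polynomial of degree `k` evaluated at the family `v`. -/
def ePoly {ι R : Type*} [Fintype ι] [DecidableEq ι] [CommSemiring R] (k : ℕ) (v : ι → R) : R :=
  ∑ s ∈ Finset.univ.powersetCard k, ∏ i ∈ s, v i

/-- The alphabet `A_q(x) = {q^{2j} x_i : 1 ≤ i ≤ N, 0 ≤ j ≤ n-1}`. -/
def alphabetVal (n N : ℕ) : Fin N × Fin n → MvPolynomial (Fin N) (Polynomial ℤ) :=
  fun p => MvPolynomial.C (Polynomial.X ^ (2 * (p.2 : ℕ))) * MvPolynomial.X p.1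

/-- The Schur function `s_lam` evaluated at the alphabet `A_q(x)`,
i.e. the plethysm `s_lam[(1+q²+⋯+q^{2n-2})X]` in `N` variables. -/
def schurAlph (n N : ℕ) (lam : YoungDiagram) : MvPolynomial (Fin N) (Polynomial ℤ) :=
  MvPolynomial.aeval
    (fun t : Fin (n * N) => alphabetVal n N (Prod.swap (finProdFinEquiv.symm t)))
    (schurPoly (n * N) lam)

end

namespace RibbonSym

variable {K : Type*} [Field K]

/-! ### The intertwining kernel of the two-row vertex model -/

/-- The state of a site with respect to two successive strips: the first (second) component says
whether the first (second) strip has a ribbon whose tail lies at that site. -/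
abbrev St : Type := Bool × Bool

/-- The number of sites of a window used by the first strip only. -/
def cA (u : List St) : ℕ := u.count (true, false)
/-- The number of sites of a window used by the second strip only. -/
def cB (u : List St) : ℕ := u.count (false, true)
/-- The number of sites of a window used by both strips. -/
def cE (u : List St) : ℕ := u.count (true, true)

/-- The gauge exponent of a window (newest site first): the number of pairs (older, newer) of
states of the form `(A, B)`, `(E, A)` or `(A, E)`, where `A`, `B`, `E` are the states counted by
`cA`, `cB`, `cE`. -/
def gau : List St → ℕ
  | [] => 0
  | (false, false) :: w => gau w
  | (true, false) :: w => gau w + cE w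
  | (false, true) :: w => gau w + cA w
  | (true, true) :: w => gau w + cA w

/-- The intertwining kernel, as an operator on functions of the window (newest site first). Each
state `(false, true)` either stays, with weight `z * Q ^ d` where `d` is the number of newer states
already changed, or becomes `(true, false)` with the complementary weight `1 - z * Q ^ d`.
A state `(true, true)` contributes the constant factor `z₀`. -/
def ker (z₀ Q : K) : K → List St → (List St → K) → K
  | _, [], f => f []
  | z, (false, false) :: u, f => ker z₀ Q z u (fun v => f ((false, false) :: v))
  | z, (true, false) :: u, f => ker z₀ Q z u (fun v => f ((true, false) :: v))
  | z, (true, true) :: u, f => z₀ * ker z₀ Q z u (fun v => f ((true, true) :: v))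
  | z, (false, true) :: u, f => z * ker z₀ Q z u (fun v => f ((false, true) :: v)) +
      (1 - z) * ker z₀ Q (Q * z) u (fun v => f ((true, false) :: v))

/-- The relation between the two arguments of the kernel: same length, and the same statistics
up to changing states `(false, true)` into `(true, false)`. -/
def Compat (u v : List St) : Prop :=
  v.length = u.length ∧ cE v = cE u ∧ cA v + cB v = cA u + cB u

theorem ker_congr (z₀ Q : K) (u : List St) : ∀ (z : K) (f g : List St → K),
    (∀ v, Compat u v → f v = g v) → ker z₀ Q z u f = ker z₀ Q z u g := by
  induction u with
  | nil => intro z f g h; exact h [] ⟨rfl, rfl, rfl⟩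
  | cons s u ih =>
    intro z f g h
    have key : ∀ t : St, (∀ v, Compat u v → Compat (s :: u) (t :: v)) → ∀ z' : K,
        ker z₀ Q z' u (fun v => f (t :: v)) = ker z₀ Q z' u (fun v => g (t :: v)) :=
      fun t ht z' => ih z' _ _ fun v hv => h _ (ht v hv)
    have c1 : ∀ t : St, ∀ v, Compat u v → Compat (t :: u) (t :: v) := by
      intro t v ⟨h1, h2, h3⟩
      refine ⟨by simp [h1], ?_, ?_⟩ <;> rcases t with ⟨_ | _, _ | _⟩ <;>
        simp [cA, cB, cE] at * <;> omega
    rcases s with ⟨_ | _, _ | _⟩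
    · exact key _ (c1 _) z
    · have c2 : ∀ v, Compat u v → Compat ((false, true) :: u) ((true, false) :: v) := by
        intro v ⟨h1, h2, h3⟩
        refine ⟨by simp [h1], ?_, ?_⟩ <;> simp [cA, cB, cE] at * <;> omega
      simp only [ker, key _ (c1 _) z, key _ c2 (Q * z)]
    · exact key _ (c1 _) z
    · simp only [ker, key _ (c1 _) z]

theorem ker_add (z₀ Q : K) (u : List St) : ∀ (z : K) (f g : List St → K),
    ker z₀ Q z u (fun v => f v + g v) = ker z₀ Q z u f + ker z₀ Q z u g := by
  induction u with
  | nil => intro z f g; rfl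
  | cons s u ih =>
    intro z f g
    rcases s with ⟨_ | _, _ | _⟩ <;> simp only [ker, ih] <;> ring

theorem ker_mul (z₀ Q c : K) (u : List St) : ∀ (z : K) (f : List St → K),
    ker z₀ Q z u (fun v => c * f v) = c * ker z₀ Q z u f := by
  induction u with
  | nil => intro z f; rfl
  | cons s u ih =>
    intro z f
    rcases s with ⟨_ | _, _ | _⟩ <;> simp only [ker, ih] <;> ring

theorem ker_zero (z₀ Q z : K) (u : List St) : ker z₀ Q z u (fun _ => 0) = 0 := by
  have := ker_mul z₀ Q 0 u z (fun _ => 0)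
  simpa using this

/-- The `q`-binomial identity `(z; Q)_{d+1} = (1 - z) (Qz; Q)_d`, in kernel form. -/
theorem ker_shift (z₀ Q : K) (u : List St) : ∀ (z : K) (f : List St → K),
    (1 - z) * ker z₀ Q (Q * z) u f =
      ker z₀ Q z u (fun v => (Q ^ cB v - z * Q ^ cB u) * f v) := by
  induction u with
  | nil => intro z f; simp [ker, cB]
  | cons s u ih =>
    intro z f
    rcases s with ⟨_ | _, _ | _⟩
    · simp only [ker, cB, List.count_cons] at *
      simpa using ih z _
    · have h1 := ih z (fun v => f ((false, true) :: v))
      have h2 := ih (Q * z) (fun v => f ((true, false) :: v))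
      simp only [ker, cB, List.count_cons] at *
      simp only [beq_self_eq_true, if_true, beq_iff_eq, Prod.mk.injEq, Bool.true_eq_false,
        Bool.false_eq_true, and_self, if_false, add_zero] at *
      have e1 : ker z₀ Q z u (fun v => (Q ^ (List.count (false, true) v + 1) -
          z * Q ^ (List.count (false, true) u + 1)) * f ((false, true) :: v)) =
          Q * ker z₀ Q z u (fun v => (Q ^ (List.count (false, true) v) -
          z * Q ^ (List.count (false, true) u)) * f ((false, true) :: v)) := by
        rw [← ker_mul]; congr 1; funext v; ring
      have e2 : ker z₀ Q (Q * z) u (fun v => (Q ^ (List.count (false, true) v) -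
          z * Q ^ (List.count (false, true) u + 1)) * f ((true, false) :: v)) =
          ker z₀ Q (Q * z) u (fun v => (Q ^ (List.count (false, true) v) -
          Q * z * Q ^ (List.count (false, true) u)) * f ((true, false) :: v)) := by
        congr 1; funext v; ring
      rw [e1, e2, ← h1, ← h2]; ring
    · simp only [ker, cB, List.count_cons] at *
      simpa using ih z _
    · have h1 := ih z (fun v => f ((true, true) :: v))
      simp only [ker, cB, List.count_cons] at *
      simp only [beq_iff_eq, Prod.mk.injEq, Bool.true_eq_false, false_and,
        if_false, add_zero] at *
      rw [← h1]; ring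

theorem ker_snoc00 (z₀ Q : K) (u : List St) : ∀ (z : K) (f : List St → K),
    ker z₀ Q z (u ++ [(false, false)]) f = ker z₀ Q z u (fun v => f (v ++ [(false, false)])) := by
  induction u with
  | nil => intro z f; rfl
  | cons s u ih =>
    intro z f; rcases s with ⟨_ | _, _ | _⟩ <;> simp only [List.cons_append, ker, ih]

theorem ker_snoc10 (z₀ Q : K) (u : List St) : ∀ (z : K) (f : List St → K),
    ker z₀ Q z (u ++ [(true, false)]) f = ker z₀ Q z u (fun v => f (v ++ [(true, false)])) := by
  induction u with
  | nil => intro z f; rfl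
  | cons s u ih =>
    intro z f; rcases s with ⟨_ | _, _ | _⟩ <;> simp only [List.cons_append, ker, ih]

theorem ker_snoc11 (z₀ Q : K) (u : List St) : ∀ (z : K) (f : List St → K),
    ker z₀ Q z (u ++ [(true, true)]) f = z₀ * ker z₀ Q z u (fun v => f (v ++ [(true, true)])) := by
  induction u with
  | nil => intro z f; rfl
  | cons s u ih =>
    intro z f; rcases s with ⟨_ | _, _ | _⟩ <;> simp only [List.cons_append, ker, ih]; ring

/-- The effect of the kernel on the oldest site when it is in state `(false, true)`: the exponent
of `Q` is the number of changes among all the other sites. -/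
theorem ker_snoc01 (z₀ Q : K) (hQ : Q ≠ 0) (u : List St) : ∀ (z : K) (f : List St → K),
    ker z₀ Q z (u ++ [(false, true)]) f = ker z₀ Q z u (fun v =>
      z * Q ^ cB u * (Q ^ cB v)⁻¹ * f (v ++ [(false, true)]) +
      (1 - z * Q ^ cB u * (Q ^ cB v)⁻¹) * f (v ++ [(true, false)])) := by
  induction u with
  | nil => intro z f; simp [ker, cB]
  | cons s u ih =>
    intro z f
    rcases s with ⟨_ | _, _ | _⟩
    · simp only [List.cons_append, ker, ih, cB, List.count_cons]; simp
    · simp only [List.cons_append, ker, ih, cB, List.count_cons]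
      simp only [beq_self_eq_true, if_true, beq_iff_eq, Prod.mk.injEq, Bool.true_eq_false,
        Bool.false_eq_true, and_self, if_false, add_zero]
      congr 2
      · congr 1; funext v
        have : z * Q ^ (List.count (false, true) u + 1) * (Q ^ (List.count (false, true) v + 1))⁻¹
          = z * Q ^ (List.count (false, true) u) * (Q ^ (List.count (false, true) v))⁻¹ := by
          field_simp
          ring
        rw [this]
      · congr 1; funext v
        rw [show Q * z * Q ^ (List.count (false, true) u) =
          z * Q ^ (List.count (false, true) u + 1) by ring]
    · simp only [List.cons_append, ker, ih, cB, List.count_cons]; simp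
    · simp only [List.cons_append, ker, ih, cB, List.count_cons]; simp

theorem gau_snoc (w : List St) (s : St) : gau (w ++ [s]) = gau w +
    (if s = (true, false) then cB w + cE w else if s = (true, true) then cA w else 0) := by
  induction w with
  | nil => rcases s with ⟨_ | _, _ | _⟩ <;> simp [gau, cA, cB, cE]
  | cons t w ih =>
    rcases t with ⟨_ | _, _ | _⟩ <;> rcases s with ⟨_ | _, _ | _⟩ <;>
      simp [gau, ih, cA, cB, cE] <;> omega

/-! ### The two-row partition function and its symmetry -/

/-- The weight of one site. Here `m`, `m''` are the edge bits of the inner and the outer shape, `s`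
is the state of the site `n` steps earlier, `t` the state of the site itself and `w` the window of
the `n - 1` sites in between. The bit `m'` of the intermediate shape is forced. -/
def stepWt (q x y : K) (m m'' : Bool) (w : List St) (s t : St) : K :=
  let m' := (m || s.1) && !t.1
  if (m && s.1) = false ∧ (t.1 = true → (m || s.1) = true) ∧ (m' && s.2) = false ∧
      (t.2 = true → (m' || s.2) = true) ∧ m'' = ((m' || s.2) && !t.2) then
    q ^ ((m.toNat + t.1.toNat) * w.countP (fun a => a.1) +
      (m'.toNat + t.2.toNat) * w.countP (fun a => a.2)) * x ^ t.1.toNat * y ^ t.2.toNat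
  else 0

/-- The partition function of the `L` sites from `p` on, given the window `u` of the `n` preceding
sites (newest first). At the end no strip may use any site of the window. -/
def Zrec (q x y : K) (m m'' : ℤ → Bool) : ℕ → ℤ → List St → K
  | 0, _, u => if ∀ s ∈ u, s = (false, false) then 1 else 0
  | L + 1, p, u => ∑ t : St, stepWt q x y (m p) (m'' p) u.dropLast (u.getLastD (false, false)) t *
      Zrec q x y m m'' L (p + 1) (t :: u.dropLast)

theorem countP_fst (w : List St) : w.countP (fun a => a.1) = cA w + cE w := by
  induction w with
  | nil => rfl
  | cons s w ih =>
    rcases s with ⟨_ | _, _ | _⟩ <;> simp [cA, cE, List.count_cons, List.countP_cons] at * <;> omega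

theorem countP_snd (w : List St) : w.countP (fun a => a.2) = cB w + cE w := by
  induction w with
  | nil => rfl
  | cons s w ih =>
    rcases s with ⟨_ | _, _ | _⟩ <;> simp [cB, cE, List.count_cons, List.countP_cons] at * <;> omega

theorem gau_of_zero (u : List St) (h : ∀ s ∈ u, s = (false, false)) : gau u = 0 := by
  induction u with
  | nil => rfl
  | cons s u ih =>
    have hs := h s (by simp)
    subst hs
    exact ih fun t ht => h t (by simp [ht])

theorem ker_ind (z₀ Q c : K) (u : List St) : ∀ z : K,
    ker z₀ Q z u (fun v => if ∀ s ∈ v, s = (false, false) then c else 0) =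
      if ∀ s ∈ u, s = (false, false) then c else 0 := by
  induction u with
  | nil => intro z; simp [ker]
  | cons s u ih =>
    intro z
    rcases s with ⟨_ | _, _ | _⟩
    · simpa [ker] using ih z
    · simp [ker, ker_zero]
    · simp [ker, ker_zero]
    · simp [ker, ker_zero]

/-- The kernel intertwines the two orders of the parameters: up to the gauge factor, applying it
to the partition function with parameters `(x, y)` gives the one with parameters `(y, x)`. -/
theorem Zrec_intertwine (q x y : K) (hq : q ≠ 0) (hx : x ≠ 0) (hy : y ≠ 0) (m m'' : ℤ → Bool)
    (L : ℕ) : ∀ (p : ℤ) (u : List St), u ≠ [] →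
    (q ^ gau u)⁻¹ * Zrec q y x m m'' L p u =
      ker (y / x) (q ^ 2)⁻¹ (y / x) u (fun v => (q ^ gau v)⁻¹ * Zrec q x y m m'' L p v) := by
  induction L with
  | zero =>
    intro p u _
    have : (fun v => (q ^ gau v)⁻¹ * Zrec q x y m m'' 0 p v) =
        fun v => if ∀ s ∈ v, s = (false, false) then (1 : K) else 0 := by
      funext v
      simp only [Zrec]
      split_ifs with h
      · simp [gau_of_zero v h]
      · simp
    rw [this, ker_ind]
    simp only [Zrec]
    split_ifs with h
    · simp [gau_of_zero u h]
    · simp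
  | succ L ih =>
    intro p u hu
    obtain ⟨w, s, rfl⟩ : ∃ w s, u = w ++ [s] :=
      ⟨u.dropLast, u.getLast hu, (List.dropLast_append_getLast hu).symm⟩
    set z := y / x with hz
    set Q := (q ^ 2)⁻¹ with hQ
    have hQ0 : Q ≠ 0 := by simp [hQ, hq]
    set F : St → List St → K := fun t v => Zrec q x y m m'' L (p + 1) (t :: v) with hF
    set Z' : St → K := fun t => Zrec q y x m m'' L (p + 1) (t :: w) with hZ'
    have e00 := ih (p + 1) ((false, false) :: w) (by simp)
    have e10 := ih (p + 1) ((true, false) :: w) (by simp)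
    have e01 := ih (p + 1) ((false, true) :: w) (by simp)
    have e11 := ih (p + 1) ((true, true) :: w) (by simp)
    simp only [ker, gau] at e00 e10 e01 e11
    rw [ker_shift, ← ker_mul, ← ker_add] at e01
    rw [← ker_mul] at e11
    -- The induction hypothesis solved for the values of the swapped partition function.
    have g00 : Z' (false, false) = ker z Q z w
        (fun v => q ^ gau w * ((q ^ gau v)⁻¹ * F (false, false) v)) := by
      rw [ker_mul, ← e00]; field_simp; rfl
    have g10 : Z' (true, false) = ker z Q z w
        (fun v => q ^ (gau w + cE w) * ((q ^ (gau v + cE v))⁻¹ * F (true, false) v)) := by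
      rw [ker_mul, ← e10]; field_simp; rfl
    have g01 : Z' (false, true) = ker z Q z w
        (fun v => q ^ (gau w + cA w) * (z * ((q ^ (gau v + cA v))⁻¹ * F (false, true) v) +
          (Q ^ cB v - z * Q ^ cB w) * ((q ^ (gau v + cE v))⁻¹ * F (true, false) v))) := by
      rw [ker_mul, ← e01]; field_simp; rfl
    have g11 : Z' (true, true) = ker z Q z w
        (fun v => q ^ (gau w + cA w) * (z * ((q ^ (gau v + cA v))⁻¹ * F (true, true) v))) := by
      rw [ker_mul, ← e11]; field_simp; rfl
    have hl : ∀ x y : K, ∀ v : List St, ∀ t : St, Zrec q x y m m'' (L + 1) p (v ++ [t]) =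
        ∑ t' : St, stepWt q x y (m p) (m'' p) v t t' *
          Zrec q x y m m'' L (p + 1) (t' :: v) := by
      intro x y v t; simp [Zrec]
    have hs : ∀ f : St → K, ∑ t, f t =
        f (false, false) + f (true, false) + f (false, true) + f (true, true) := by
      intro f; simp [Fintype.sum_prod_type]; ring
    -- Everything is collected under one application of the kernel and compared pointwise.
    have comb : (q ^ gau (w ++ [s]))⁻¹ * Zrec q y x m m'' (L + 1) p (w ++ [s]) =
      ker z Q z w (fun v => (q ^ gau (w ++ [s]))⁻¹ * (
        stepWt q y x (m p) (m'' p) w s (false, false) *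
          (q ^ gau w * ((q ^ gau v)⁻¹ * F (false, false) v)) +
        stepWt q y x (m p) (m'' p) w s (true, false) *
          (q ^ (gau w + cE w) * ((q ^ (gau v + cE v))⁻¹ * F (true, false) v)) +
        stepWt q y x (m p) (m'' p) w s (false, true) *
          (q ^ (gau w + cA w) * (z * ((q ^ (gau v + cA v))⁻¹ * F (false, true) v) +
          (Q ^ cB v - z * Q ^ cB w) * ((q ^ (gau v + cE v))⁻¹ * F (true, false) v))) +
        stepWt q y x (m p) (m'' p) w s (true, true) *
          (q ^ (gau w + cA w) * (z * ((q ^ (gau v + cA v))⁻¹ * F (true, true) v))))) := by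
      rw [hl, hs, ker_mul, ker_add, ker_add, ker_add, ker_mul _ _ (stepWt _ _ _ _ _ _ _ _),
        ker_mul _ _ (stepWt _ _ _ _ _ _ _ _), ker_mul _ _ (stepWt _ _ _ _ _ _ _ _),
        ker_mul _ _ (stepWt _ _ _ _ _ _ _ _), ← g00, ← g10, ← g01, ← g11]
    rw [comb]
    have hQv : ∀ k : ℕ, Q ^ k = ((q ^ k) ^ 2)⁻¹ := by
      intro k; rw [hQ, inv_pow, ← pow_mul, ← pow_mul, mul_comm]
    have hzy : z = y / x := hz
    -- The pointwise identity, with `q ^ cA v` eliminated through `Compat`.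
    have fin : ∀ v, Compat w v → q ^ cA v = q ^ cA w * q ^ cB w / q ^ cB v := by
      rintro v ⟨-, -, hAB⟩
      rw [eq_div_iff (pow_ne_zero _ hq), ← pow_add, ← pow_add, hAB]
    have hF' : ∀ t v, Zrec q x y m m'' L (p + 1) (t :: v) = F t v := fun _ _ => rfl
    clear_value z Q F
    rcases s with ⟨_ | _, _ | _⟩
    · rw [ker_snoc00]
      apply ker_congr
      intro v hv
      obtain ⟨-, hE, hAB⟩ := id hv
      rw [hl, hs]
      simp only [stepWt, gau_snoc, countP_fst, countP_snd, hE, hQv, hF']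
      have fv := fin v hv
      have n1 := pow_ne_zero (cA w) hq
      have n2 := pow_ne_zero (cB w) hq
      have n3 := pow_ne_zero (cE w) hq
      have n4 := pow_ne_zero (cB v) hq
      have n5 := pow_ne_zero (gau w) hq
      have n6 := pow_ne_zero (gau v) hq
      generalize m p = b at *
      generalize m'' p = b'' at *
      cases b <;> cases b'' <;>
        simp [pow_add, two_mul, fv, hzy] <;>
        generalize q ^ cA w = A at * <;> generalize q ^ cB w = B at * <;>
        generalize q ^ cE w = E at * <;> generalize q ^ cB v = B' at * <;>
        generalize q ^ gau w = g at * <;> generalize q ^ gau v = g' at * <;>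
        field_simp <;> ring
    · rw [ker_snoc01 _ _ hQ0]
      apply ker_congr
      intro v hv
      obtain ⟨-, hE, hAB⟩ := id hv
      rw [hl, hl, hs, hs]
      simp only [stepWt, gau_snoc, countP_fst, countP_snd, hE, hQv, hF']
      have fv := fin v hv
      have n1 := pow_ne_zero (cA w) hq
      have n2 := pow_ne_zero (cB w) hq
      have n3 := pow_ne_zero (cE w) hq
      have n4 := pow_ne_zero (cB v) hq
      have n5 := pow_ne_zero (gau w) hq
      have n6 := pow_ne_zero (gau v) hq
      generalize m p = b at *
      generalize m'' p = b'' at *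
      cases b <;> cases b'' <;>
        simp [pow_add, two_mul, fv, hzy] <;>
        generalize q ^ cA w = A at * <;> generalize q ^ cB w = B at * <;>
        generalize q ^ cE w = E at * <;> generalize q ^ cB v = B' at * <;>
        generalize q ^ gau w = g at * <;> generalize q ^ gau v = g' at * <;>
        field_simp <;> ring
    · rw [ker_snoc10]
      apply ker_congr
      intro v hv
      obtain ⟨-, hE, hAB⟩ := id hv
      rw [hl, hs]
      simp only [stepWt, gau_snoc, countP_fst, countP_snd, hE, hQv, hF']
      have fv := fin v hv
      have n1 := pow_ne_zero (cA w) hq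
      have n2 := pow_ne_zero (cB w) hq
      have n3 := pow_ne_zero (cE w) hq
      have n4 := pow_ne_zero (cB v) hq
      have n5 := pow_ne_zero (gau w) hq
      have n6 := pow_ne_zero (gau v) hq
      generalize m p = b at *
      generalize m'' p = b'' at *
      cases b <;> cases b'' <;>
        simp [pow_add, two_mul, fv, hzy] <;>
        generalize q ^ cA w = A at * <;> generalize q ^ cB w = B at * <;>
        generalize q ^ cE w = E at * <;> generalize q ^ cB v = B' at * <;>
        generalize q ^ gau w = g at * <;> generalize q ^ gau v = g' at * <;>
        field_simp <;> ring
    · rw [ker_snoc11, ← ker_mul]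
      apply ker_congr
      intro v hv
      obtain ⟨-, hE, hAB⟩ := id hv
      rw [hl, hs]
      simp only [stepWt, gau_snoc, countP_fst, countP_snd, hE, hQv, hF']
      have fv := fin v hv
      have n1 := pow_ne_zero (cA w) hq
      have n2 := pow_ne_zero (cB w) hq
      have n3 := pow_ne_zero (cE w) hq
      have n4 := pow_ne_zero (cB v) hq
      have n5 := pow_ne_zero (gau w) hq
      have n6 := pow_ne_zero (gau v) hq
      generalize m p = b at *
      generalize m'' p = b'' at *
      cases b <;> cases b'' <;>
        simp [pow_add, fv, hzy] <;>
        generalize q ^ cA w = A at * <;> generalize q ^ cB w = B at * <;>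
        generalize q ^ cE w = E at * <;> generalize q ^ cB v = B' at * <;>
        generalize q ^ gau w = g at * <;> generalize q ^ gau v = g' at * <;>
        field_simp

theorem ker_zeros (z₀ Q z : K) (f : List St → K) : ∀ n : ℕ,
    ker z₀ Q z (List.replicate n (false, false)) f = f (List.replicate n (false, false)) := by
  intro n
  induction n generalizing f with
  | zero => rfl
  | succ n ih => simp only [List.replicate_succ, ker, ih]

theorem Zrec_symm (q x y : K) (hq : q ≠ 0) (hx : x ≠ 0) (hy : y ≠ 0) (m m'' : ℤ → Bool)
    (L : ℕ) (p : ℤ) (k : ℕ) :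
    Zrec q y x m m'' L p (List.replicate (k + 1) (false, false)) =
      Zrec q x y m m'' L p (List.replicate (k + 1) (false, false)) := by
  have h := Zrec_intertwine q x y hq hx hy m m'' L p (List.replicate (k + 1) (false, false))
    (by simp)
  rw [ker_zeros, gau_of_zero _ (by simp)] at h
  simpa using h

/-! ### The partition function as a sum over pairs of sets of sites -/

/-- The state of the site `i` when the two strips have the sets of tails `P₁` and `P₂`. -/
noncomputable def stf (P₁ P₂ : Finset ℤ) (i : ℤ) : St := (decide (i ∈ P₁), decide (i ∈ P₂))

/-- The window of the `k` sites before `p`, newest first. -/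
noncomputable def win (k : ℕ) (p : ℤ) (P₁ P₂ : Finset ℤ) : List St :=
  (List.range k).map fun i : ℕ => stf P₁ P₂ (p - 1 - i)

/-- The weight of the site `j`, for ribbons of size `k + 1`. -/
noncomputable def loc (q x y : K) (m m'' : ℤ → Bool) (k : ℕ) (j : ℤ) (P₁ P₂ : Finset ℤ) : K :=
  stepWt q x y (m j) (m'' j) (win k j P₁ P₂) (stf P₁ P₂ (j - 1 - k)) (stf P₁ P₂ j)

theorem win_congr (k : ℕ) (p : ℤ) (P₁ P₂ R₁ R₂ : Finset ℤ)
    (h : ∀ i < p, stf P₁ P₂ i = stf R₁ R₂ i) : win k p P₁ P₂ = win k p R₁ R₂ := by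
  unfold win
  apply List.map_congr_left
  intro i _
  exact h _ (by omega)

theorem loc_congr (q x y : K) (m m'' : ℤ → Bool) (k : ℕ) (p : ℤ) (P₁ P₂ R₁ R₂ : Finset ℤ)
    (h : ∀ i ≤ p, stf P₁ P₂ i = stf R₁ R₂ i) :
    loc q x y m m'' k p P₁ P₂ = loc q x y m m'' k p R₁ R₂ := by
  unfold loc
  rw [win_congr k p P₁ P₂ R₁ R₂ (fun i hi => h i hi.le), h p le_rfl, h _ (by omega)]

theorem win_dropLast (k : ℕ) (p : ℤ) (P₁ P₂ : Finset ℤ) :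
    win (k + 1) p P₁ P₂ = win k p P₁ P₂ ++ [stf P₁ P₂ (p - 1 - k)] := by
  simp [win, List.range_succ]

theorem win_succ (k : ℕ) (p : ℤ) (P₁ P₂ : Finset ℤ) :
    win (k + 1) (p + 1) P₁ P₂ = stf P₁ P₂ p :: win k p P₁ P₂ := by
  simp only [win, List.range_succ_eq_map, List.map_cons, List.map_map]
  congr 1
  · congr 1; push_cast; ring
  · apply List.map_congr_left
    intro i _
    simp only [Function.comp]
    congr 1; push_cast; ring

theorem Zrec_eq_sum (q x y : K) (m m'' : ℤ → Bool) (k : ℕ) (L : ℕ) : ∀ (p : ℤ) (P₁ P₂ : Finset ℤ),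
    (∀ i ∈ P₁, i < p) → (∀ i ∈ P₂, i < p) →
    Zrec q x y m m'' L p (win (k + 1) p P₁ P₂) =
    ∑ A₁ ∈ (Finset.Ico p (p + L)).powerset, ∑ A₂ ∈ (Finset.Ico p (p + L)).powerset,
      (∏ j ∈ Finset.Ico p (p + L), loc q x y m m'' k j (P₁ ∪ A₁) (P₂ ∪ A₂)) *
      (if ∀ s ∈ win (k + 1) (p + L) (P₁ ∪ A₁) (P₂ ∪ A₂), s = (false, false) then 1 else 0) := by
  induction L with
  | zero =>
    intro p P₁ P₂ h₁ h₂
    have h0 : Finset.Ico p (p + ((0 : ℕ) : ℤ)) = ∅ := by simp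
    rw [h0, Finset.powerset_empty, Finset.sum_singleton, Finset.sum_singleton, Finset.prod_empty,
      one_mul]
    simp only [Zrec, Finset.union_empty, Nat.cast_zero, add_zero]
  | succ L ih =>
    intro p P₁ P₂ h₁ h₂
    have hI : Finset.Ico p (p + ((L + 1 : ℕ) : ℤ)) = insert p (Finset.Ico (p + 1) (p + 1 + L)) := by
      ext i; simp only [Finset.mem_Ico, Finset.mem_insert]; push_cast; omega
    have hnp : p ∉ Finset.Ico (p + 1) (p + 1 + (L : ℤ)) := by simp
    -- One choice of the state at `p`, with the later sites still free.
    have key : ∀ R₁ R₂ : Finset ℤ, (∀ i ∈ R₁, i < p + 1) → (∀ i ∈ R₂, i < p + 1) →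
        loc q x y m m'' k p R₁ R₂ * Zrec q x y m m'' L (p + 1) (win (k + 1) (p + 1) R₁ R₂) =
        ∑ A₁ ∈ (Finset.Ico (p + 1) (p + 1 + (L : ℤ))).powerset,
        ∑ A₂ ∈ (Finset.Ico (p + 1) (p + 1 + (L : ℤ))).powerset,
          (∏ j ∈ insert p (Finset.Ico (p + 1) (p + 1 + (L : ℤ))),
            loc q x y m m'' k j (R₁ ∪ A₁) (R₂ ∪ A₂)) *
          (if ∀ s ∈ win (k + 1) (p + ((L + 1 : ℕ) : ℤ)) (R₁ ∪ A₁) (R₂ ∪ A₂),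
            s = (false, false) then 1 else 0) := by
      intro R₁ R₂ hR₁ hR₂
      rw [ih (p + 1) R₁ R₂ hR₁ hR₂, Finset.mul_sum]
      refine Finset.sum_congr rfl fun A₁ hA₁ => ?_
      rw [Finset.mul_sum]
      refine Finset.sum_congr rfl fun A₂ hA₂ => ?_
      rw [Finset.prod_insert hnp, mul_assoc]
      have e : p + 1 + (L : ℤ) = p + ((L + 1 : ℕ) : ℤ) := by push_cast; ring
      rw [Finset.mem_powerset] at hA₁ hA₂
      have hl : loc q x y m m'' k p R₁ R₂ = loc q x y m m'' k p (R₁ ∪ A₁) (R₂ ∪ A₂) := by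
        apply loc_congr
        intro i hi
        have a1 : i ∉ A₁ := fun h => by have := Finset.mem_Ico.1 (hA₁ h); omega
        have a2 : i ∉ A₂ := fun h => by have := Finset.mem_Ico.1 (hA₂ h); omega
        simp [stf, a1, a2]
      rw [hl, e]
    have p₁ : p ∉ P₁ := fun h => lt_irrefl _ (h₁ p h)
    have p₂ : p ∉ P₂ := fun h => lt_irrefl _ (h₂ p h)
    have lt₁ : ∀ i ∈ P₁, i < p + 1 := fun i hi => by have := h₁ i hi; omega
    have lt₂ : ∀ i ∈ P₂, i < p + 1 := fun i hi => by have := h₂ i hi; omega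
    have lt₁' : ∀ i ∈ insert p P₁, i < p + 1 := by
      intro i hi; rcases Finset.mem_insert.1 hi with rfl | hi
      · omega
      · exact lt₁ i hi
    have lt₂' : ∀ i ∈ insert p P₂, i < p + 1 := by
      intro i hi; rcases Finset.mem_insert.1 hi with rfl | hi
      · omega
      · exact lt₂ i hi
    rw [hI, Finset.sum_powerset_insert hnp]
    simp only [Finset.sum_powerset_insert hnp, Finset.sum_add_distrib]
    simp only [Finset.union_insert, ← Finset.insert_union]
    rw [← key P₁ P₂ lt₁ lt₂, ← key (insert p P₁) P₂ lt₁' lt₂,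
      ← key P₁ (insert p P₂) lt₁ lt₂', ← key (insert p P₁) (insert p P₂) lt₁' lt₂']
    have hc : ∀ R₁ R₂ : Finset ℤ, (∀ i < p, stf R₁ R₂ i = stf P₁ P₂ i) →
        loc q x y m m'' k p R₁ R₂ * Zrec q x y m m'' L (p + 1) (win (k + 1) (p + 1) R₁ R₂) =
        stepWt q x y (m p) (m'' p) (win k p P₁ P₂) (stf P₁ P₂ (p - 1 - k)) (stf R₁ R₂ p) *
          Zrec q x y m m'' L (p + 1) (stf R₁ R₂ p :: win k p P₁ P₂) := by
      intro R₁ R₂ h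
      rw [win_succ, loc, win_congr k p R₁ R₂ P₁ P₂ h, h _ (by omega)]
    rw [hc P₁ P₂ (fun _ _ => rfl), hc (insert p P₁) P₂ (fun i hi => by simp [stf, hi.ne]),
      hc P₁ (insert p P₂) (fun i hi => by simp [stf, hi.ne]),
      hc (insert p P₁) (insert p P₂) (fun i hi => by simp [stf, hi.ne])]
    rw [Zrec, win_dropLast]
    simp only [List.dropLast_concat, List.getLastD_concat, Fintype.sum_prod_type,
      Fintype.sum_bool]
    simp only [stf, p₁, p₂, decide_false, Finset.mem_insert_self, decide_true]
    ring

/-! ### Young diagrams as height functions on diagonals -/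

/-- The least value the height of a Young diagram can take on the diagonal of content `k`: the row
of the first cell of that diagonal. -/
def base (k : ℤ) : ℤ := max 0 (-k)

theorem hgt_exists (μ : YoungDiagram) (k : ℤ) :
    ∃ r : ℕ, base k ≤ r ∧ (r, ((r : ℤ) + k).toNat) ∉ μ := by
  obtain ⟨B, hB⟩ : ∃ B : ℕ, ∀ c ∈ μ.cells, c.1 < B :=
    ⟨μ.cells.sup Prod.fst + 1, fun c hc => Nat.lt_succ_of_le (Finset.le_sup (f := Prod.fst) hc)⟩
  refine ⟨max B (-k).toNat, ?_, fun h => ?_⟩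
  · unfold base; omega
  · have := hB _ ((YoungDiagram.mem_cells _).2 h)
    simp at this

/-- The height of `μ` on the diagonal of content `k`: the row of the first cell of that diagonal
outside of `μ`. -/
noncomputable def hgt (μ : YoungDiagram) (k : ℤ) : ℤ := (Nat.find (hgt_exists μ k) : ℕ)

theorem base_le_hgt (μ : YoungDiagram) (k : ℤ) : base k ≤ hgt μ k :=
  (Nat.find_spec (hgt_exists μ k)).1

theorem hgt_nonneg (μ : YoungDiagram) (k : ℤ) : 0 ≤ hgt μ k := by
  have := base_le_hgt μ k; unfold base at this; omega

theorem hgt_add_nonneg (μ : YoungDiagram) (k : ℤ) : 0 ≤ hgt μ k + k := by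
  have := base_le_hgt μ k; unfold base at this; omega

theorem mem_iff_lt_hgt (μ : YoungDiagram) (r c : ℕ) :
    (r, c) ∈ μ ↔ (r : ℤ) < hgt μ ((c : ℤ) - r) := by
  set k : ℤ := (c : ℤ) - r with hk
  have hs := Nat.find_spec (hgt_exists μ k)
  have hm : ∀ m < Nat.find (hgt_exists μ k), _ := fun m hm => Nat.find_min (hgt_exists μ k) hm
  unfold hgt
  constructor
  · intro h
    by_contra hlt
    refine hs.2 (μ.isLowerSet (?_ : _ ≤ (r, c)) h)
    rw [Prod.mk_le_mk]
    omega
  · intro h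
    have := hm r (by omega)
    by_contra hc
    apply this
    refine ⟨by unfold base; omega, ?_⟩
    have e : ((r : ℤ) + k).toNat = c := by omega
    rwa [e]

theorem hgt_unique (κ : YoungDiagram) (g : ℤ → ℤ) (hg : ∀ k, base k ≤ g k)
    (h : ∀ r c : ℕ, (r, c) ∈ κ ↔ (r : ℤ) < g ((c : ℤ) - r)) (k : ℤ) : hgt κ k = g k := by
  have key : ∀ r : ℤ, base k ≤ r → (r < hgt κ k ↔ r < g k) := by
    intro r hr
    unfold base at hr
    obtain ⟨a, rfl⟩ := Int.eq_ofNat_of_zero_le (show 0 ≤ r by omega)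
    obtain ⟨b, hb⟩ := Int.eq_ofNat_of_zero_le (show 0 ≤ (a : ℤ) + k by omega)
    have e : k = (b : ℤ) - a := by omega
    rw [e, ← mem_iff_lt_hgt, ← h]
  have h1 := key (hgt κ k) (base_le_hgt κ k)
  have h2 := key (g k) (hg k)
  omega

theorem hgt_succ_le (μ : YoungDiagram) (k : ℤ) : hgt μ (k + 1) ≤ hgt μ k := by
  by_contra hlt
  obtain ⟨a, ha⟩ := Int.eq_ofNat_of_zero_le (hgt_nonneg μ k)
  obtain ⟨b, hb⟩ := Int.eq_ofNat_of_zero_le (hgt_add_nonneg μ k)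
  have h1 : (a, b + 1) ∈ μ := by
    rw [mem_iff_lt_hgt]
    have e : ((b + 1 : ℕ) : ℤ) - a = k + 1 := by push_cast; omega
    rw [e]; omega
  have h2 : (a, b) ∈ μ := μ.isLowerSet (by rw [Prod.mk_le_mk]; omega) h1
  rw [mem_iff_lt_hgt] at h2
  have e : (b : ℤ) - a = k := by omega
  rw [e] at h2; omega

theorem hgt_le_succ (μ : YoungDiagram) (k : ℤ) : hgt μ k ≤ hgt μ (k + 1) + 1 := by
  by_contra hlt
  obtain ⟨a, ha⟩ := Int.eq_ofNat_of_zero_le (hgt_nonneg μ (k + 1))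
  obtain ⟨b, hb⟩ := Int.eq_ofNat_of_zero_le (hgt_add_nonneg μ (k + 1))
  have h1 : (a + 1, b) ∈ μ := by
    rw [mem_iff_lt_hgt]
    have e : (b : ℤ) - (a + 1 : ℕ) = k := by push_cast; omega
    rw [e]; push_cast; omega
  have h2 : (a, b) ∈ μ := μ.isLowerSet (by rw [Prod.mk_le_mk]; omega) h1
  rw [mem_iff_lt_hgt] at h2
  have e : (b : ℤ) - a = k + 1 := by omega
  rw [e] at h2; omega

/-- The two inequalities satisfied by every height function. -/
def IsHgt (g : ℤ → ℤ) : Prop := ∀ k, g (k + 1) ≤ g k ∧ g k ≤ g (k + 1) + 1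

theorem isHgt_hgt (μ : YoungDiagram) : IsHgt (hgt μ) :=
  fun k => ⟨hgt_succ_le μ k, hgt_le_succ μ k⟩

theorem IsHgt.le {g : ℤ → ℤ} (hg : IsHgt g) {a b : ℤ} (h : a ≤ b) :
    g b ≤ g a ∧ g a ≤ g b + (b - a) := by
  obtain ⟨d, rfl⟩ := Int.le.dest h
  clear h
  induction d with
  | zero => simp
  | succ d ih =>
    have := hg (a + d)
    have e : a + ((d + 1 : ℕ) : ℤ) = a + d + 1 := by push_cast; ring
    rw [e]
    omega

theorem le_iff_hgt (μ ν : YoungDiagram) : μ ≤ ν ↔ ∀ k, hgt μ k ≤ hgt ν k := by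
  constructor
  · intro h k
    by_contra hlt
    obtain ⟨a, ha⟩ := Int.eq_ofNat_of_zero_le (hgt_nonneg ν k)
    obtain ⟨b, hb⟩ := Int.eq_ofNat_of_zero_le (hgt_add_nonneg ν k)
    have e : k = (b : ℤ) - a := by omega
    have h1 : (a, b) ∈ μ := by rw [mem_iff_lt_hgt, ← e]; omega
    have h2 : (a, b) ∈ ν := h h1
    rw [mem_iff_lt_hgt, ← e] at h2; omega
  · rintro h ⟨r, c⟩ hrc
    rw [← YoungDiagram.mem_cells] at *
    have hrc : (r, c) ∈ μ := hrc
    show (r, c) ∈ ν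
    rw [mem_iff_lt_hgt] at *
    exact lt_of_lt_of_le hrc (h _)

theorem hgt_injective {μ ν : YoungDiagram} (h : ∀ k, hgt μ k = hgt ν k) : μ = ν :=
  le_antisymm ((le_iff_hgt _ _).2 fun k => (h k).le) ((le_iff_hgt _ _).2 fun k => (h k).ge)

theorem exists_of_hgt (ν : YoungDiagram) (g : ℤ → ℤ) (hg : IsHgt g) (hb : ∀ k, base k ≤ g k)
    (hν : ∀ k, g k ≤ hgt ν k) : ∃ κ : YoungDiagram, ∀ k, hgt κ k = g k := by
  refine ⟨⟨ν.cells.filter fun c => (c.1 : ℤ) < g ((c.2 : ℤ) - c.1), ?_⟩, ?_⟩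
  · rintro ⟨r, c⟩ ⟨r', c'⟩ hle hrc
    rw [Prod.mk_le_mk] at hle
    simp only [Finset.coe_filter, YoungDiagram.mem_cells, Set.mem_ofPred_eq] at hrc ⊢
    refine ⟨ν.isLowerSet (by rw [Prod.mk_le_mk]; omega) hrc.1, ?_⟩
    have h1 := hg.le (show (c' : ℤ) - r ≤ c - r by omega)
    have h2 := hg.le (show (c' : ℤ) - r ≤ c' - r' by omega)
    omega
  · intro k
    refine hgt_unique _ _ hb (fun r c => ?_) k
    rw [← YoungDiagram.mem_cells]
    simp only [Finset.mem_filter, YoungDiagram.mem_cells, and_iff_right_iff_imp]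
    intro h
    rw [mem_iff_lt_hgt]
    exact lt_of_lt_of_le h (hν _)

theorem exists_bound (lam : YoungDiagram) : ∃ M : ℕ, ∀ ν ≤ lam, ∀ k : ℤ,
    ((M : ℤ) ≤ k → hgt ν k = 0) ∧ (k ≤ -M → hgt ν k = -k) := by
  obtain ⟨B, hB⟩ : ∃ B : ℕ, ∀ c ∈ lam.cells, c.1 < B ∧ c.2 < B := by
    refine ⟨lam.cells.sup Prod.fst + lam.cells.sup Prod.snd + 1, fun c hc => ?_⟩
    have := Finset.le_sup (f := Prod.fst) hc
    have := Finset.le_sup (f := Prod.snd) hc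
    omega
  refine ⟨B, fun ν hν k => ⟨fun h => ?_, fun h => ?_⟩⟩
  · by_contra hne
    obtain ⟨a, rfl⟩ := Int.eq_ofNat_of_zero_le (show 0 ≤ k by omega)
    have : (0, a) ∈ ν := by
      rw [mem_iff_lt_hgt]
      have := hgt_nonneg ν a
      simp; omega
    have := hB (0, a) (hν this)
    simp at this; omega
  · by_contra hne
    obtain ⟨a, ha⟩ := Int.eq_ofNat_of_zero_le (show 0 ≤ -k by omega)
    have : (a, 0) ∈ ν := by
      rw [mem_iff_lt_hgt]
      have := hgt_add_nonneg ν k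
      have e : ((0 : ℕ) : ℤ) - a = k := by push_cast; omega
      rw [e]; omega
    have := hB (a, 0) (hν this)
    simp at this; omega

/-! ### Ribbons and their tails -/

/-- The set of cells having one cell in row `g k` on each diagonal of content `k ∈ [p, p + n)`,
and no other cell. The content `p` is called the tail of this set. -/
noncomputable def tile (n : ℕ) (p : ℤ) (g : ℤ → ℤ) : Finset Cell :=
  (Finset.Ico p (p + n)).image fun k => ((g k).toNat, (g k + k).toNat)

theorem mem_tile {n : ℕ} {p : ℤ} {g : ℤ → ℤ} (hg : ∀ k, base k ≤ g k) (r c : ℕ) :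
    (r, c) ∈ tile n p g ↔
      p ≤ (c : ℤ) - r ∧ (c : ℤ) - r < p + n ∧ (r : ℤ) = g ((c : ℤ) - r) := by
  simp only [tile, Finset.mem_image, Finset.mem_Ico, Prod.mk.injEq]
  constructor
  · rintro ⟨k, ⟨h1, h2⟩, h3, h4⟩
    have := hg k
    unfold base at this
    have e : (c : ℤ) - r = k := by omega
    rw [e]; omega
  · rintro ⟨h1, h2, h3⟩
    exact ⟨_, ⟨h1, h2⟩, by omega, by omega⟩

theorem tile_congr {n : ℕ} {p : ℤ} {g g' : ℤ → ℤ} (h : ∀ k, p ≤ k → k < p + n → g k = g' k) :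
    tile n p g = tile n p g' := by
  unfold tile
  refine Finset.image_congr fun k hk => ?_
  have hk := Finset.mem_Ico.1 (Finset.mem_coe.1 hk)
  simp only [h k hk.1 hk.2]

theorem tile_diff {n : ℕ} {p : ℤ} {κ κ₁ : YoungDiagram}
    (h : ∀ k, hgt κ₁ k = hgt κ k + if p ≤ k ∧ k < p + n then 1 else 0) :
    κ₁.cells \ κ.cells = tile n p (hgt κ) := by
  ext ⟨r, c⟩
  rw [mem_tile (base_le_hgt κ)]
  simp only [Finset.mem_sdiff, YoungDiagram.mem_cells, mem_iff_lt_hgt, h]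
  split_ifs <;> omega

theorem adj_symm {a b : Cell} (h : Adj a b) : Adj b a := by
  unfold Adj at *; omega

theorem tile_card {n : ℕ} {p : ℤ} {g : ℤ → ℤ} (hg : ∀ k, base k ≤ g k) :
    (tile n p g).card = n := by
  rw [tile, Finset.card_image_of_injective]
  · simp
  · intro k k' h
    simp only [Prod.mk.injEq] at h
    have h1 := hg k
    have h2 := hg k'
    unfold base at *
    omega

theorem tile_connected {n : ℕ} {p : ℤ} {g : ℤ → ℤ} (hg : ∀ k, base k ≤ g k) (hh : IsHgt g) :
    CellsConnected (tile n p g) := by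
  let f : ℤ → Cell := fun k => ((g k).toNat, (g k + k).toNat)
  have hadj : ∀ k, Adj (f k) (f (k + 1)) := by
    intro k
    have h1 := hg k
    have h2 := hg (k + 1)
    have h3 := hh k
    unfold base at *
    simp only [f, Adj]
    omega
  have hmem : ∀ k, p ≤ k → k < p + n → f k ∈ tile n p g := fun k h1 h2 =>
    Finset.mem_image_of_mem f (Finset.mem_Ico.2 ⟨h1, h2⟩)
  have hr : ∀ d : ℕ, p + d < p + n →
      Reach (tile n p g) (f p) (f (p + d)) ∧ Reach (tile n p g) (f (p + d)) (f p) := by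
    intro d
    induction d with
    | zero => 
      intro _
      rw [Nat.cast_zero, add_zero]
      exact ⟨Relation.ReflTransGen.refl, Relation.ReflTransGen.refl⟩
    | succ d ih =>
      intro hd
      have e : p + ((d + 1 : ℕ) : ℤ) = p + d + 1 := by push_cast; ring
      rw [e] at hd ⊢
      obtain ⟨i1, i2⟩ := ih (by omega)
      exact ⟨i1.tail ⟨hmem _ (by omega) hd, hadj _⟩,
        Relation.ReflTransGen.head ⟨hmem _ (by omega) (by omega), adj_symm (hadj _)⟩ i2⟩
  have hr' : ∀ a ∈ tile n p g, Reach (tile n p g) (f p) a ∧ Reach (tile n p g) a (f p) := by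
    intro a ha
    obtain ⟨k, hk, rfl⟩ := Finset.mem_image.1 ha
    rw [Finset.mem_Ico] at hk
    obtain ⟨d, rfl⟩ := Int.le.dest hk.1
    exact hr d hk.2
  exact fun a ha b hb => (hr' a ha).2.trans (hr' b hb).1

theorem tile_noSquare {n : ℕ} {p : ℤ} {g : ℤ → ℤ} (hg : ∀ k, base k ≤ g k) :
    NoSquare (tile n p g) := by
  rintro ⟨i, j, h1, -, -, h2⟩
  rw [mem_tile hg] at h1 h2
  have e : ((j + 1 : ℕ) : ℤ) - ((i + 1 : ℕ) : ℤ) = (j : ℤ) - i := by push_cast; ring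
  rw [e] at h2
  push_cast at h2
  omega

theorem tile_isRibbon {n : ℕ} {p : ℤ} {κ κ₁ : YoungDiagram}
    (h : ∀ k, hgt κ₁ k = hgt κ k + if p ≤ k ∧ k < p + n then 1 else 0) :
    IsRibbon n (tile n p (hgt κ)) :=
  ⟨tile_card (base_le_hgt κ), tile_connected (base_le_hgt κ) (isHgt_hgt κ),
    tile_noSquare (base_le_hgt κ), κ₁, κ,
    (le_iff_hgt _ _).2 fun k => by rw [h]; split_ifs <;> omega, (tile_diff h).symm⟩

/-- The contents met by a path of adjacent cells form an interval. -/
theorem reach_content {S : Finset Cell} {a b : Cell} (h : Reach S a b) (ha : a ∈ S) (k : ℤ)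
    (h1 : (a.2 : ℤ) - a.1 ≤ k) (h2 : k ≤ (b.2 : ℤ) - b.1) :
    ∃ c ∈ S, (c.2 : ℤ) - c.1 = k := by
  induction h with
  | refl => exact ⟨a, ha, by omega⟩
  | @tail x y hx hy ih =>
    by_cases hk : k ≤ (x.2 : ℤ) - x.1
    · exact ih hk
    · refine ⟨y, hy.1, ?_⟩
      have := hy.2
      unfold Adj at this
      omega

/-- Every ribbon is obtained by adding one cell on each of `n` consecutive diagonals of a Young
diagram. -/
theorem isRibbon_tile {n : ℕ} (hn : 1 ≤ n) {R : Finset Cell} (hR : IsRibbon n R) :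
    ∃ (p : ℤ) (κ : YoungDiagram), R = tile n p (hgt κ) := by
  obtain ⟨hc, hconn, hsq, lam, mu, hle, hS⟩ := hR
  have hle' := (le_iff_hgt _ _).1 hle
  have hmem : ∀ r c : ℕ, (r, c) ∈ R ↔
      hgt mu ((c : ℤ) - r) ≤ r ∧ (r : ℤ) < hgt lam ((c : ℤ) - r) := by
    intro r c
    rw [hS]
    simp only [Finset.mem_sdiff, YoungDiagram.mem_cells, mem_iff_lt_hgt]
    omega
  have h1 : ∀ k, hgt lam k ≤ hgt mu k + 1 := by
    intro k
    by_contra hlt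
    obtain ⟨a, ha⟩ := Int.eq_ofNat_of_zero_le (hgt_nonneg mu k)
    obtain ⟨b, hb⟩ := Int.eq_ofNat_of_zero_le (hgt_add_nonneg mu k)
    have a1 := isHgt_hgt mu k
    have a2 := isHgt_hgt mu (k - 1)
    have a3 := isHgt_hgt lam k
    have a4 := isHgt_hgt lam (k - 1)
    rw [sub_add_cancel] at a2 a4
    apply hsq
    refine ⟨a, b, ?_, ?_, ?_, ?_⟩ <;> rw [hmem]
    · rw [show (b : ℤ) - a = k by omega]; omega
    · rw [show (b : ℤ) - ((a + 1 : ℕ) : ℤ) = k - 1 by push_cast; omega]; push_cast; omega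
    · rw [show ((b + 1 : ℕ) : ℤ) - a = k + 1 by push_cast; omega]; omega
    · rw [show ((b + 1 : ℕ) : ℤ) - ((a + 1 : ℕ) : ℤ) = k by push_cast; omega]; push_cast; omega
  have hR' : ∀ c ∈ R, (c.1 : ℤ) = hgt mu ((c.2 : ℤ) - c.1) := by
    rintro ⟨r, c⟩ h
    have := (hmem r c).1 h
    have := h1 ((c : ℤ) - r)
    simp only
    omega
  -- the set of contents of `R`
  set D : Finset ℤ := R.image fun c => (c.2 : ℤ) - c.1 with hD
  have hDc : D.card = n := by
    rw [hD, Finset.card_image_of_injOn, hc]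
    intro c h c' h' e
    have e : (c.2 : ℤ) - c.1 = (c'.2 : ℤ) - c'.1 := e
    have i1 := hR' c h
    have i2 := hR' c' h'
    rw [e] at i1
    ext <;> omega
  have hne : D.Nonempty := by rw [← Finset.card_pos]; omega
  have hDI : D = Finset.Icc (D.min' hne) (D.max' hne) := by
    ext k
    rw [Finset.mem_Icc]
    constructor
    · exact fun h => ⟨D.min'_le k h, D.le_max' k h⟩
    · rintro ⟨k1, k2⟩
      obtain ⟨a, ha, ea⟩ := Finset.mem_image.1 (D.min'_mem hne)
      obtain ⟨b, hb, eb⟩ := Finset.mem_image.1 (D.max'_mem hne)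
      obtain ⟨c, hc, ec⟩ := reach_content (hconn a ha b hb) ha k (by omega) (by omega)
      exact Finset.mem_image.2 ⟨c, hc, ec⟩
  refine ⟨D.min' hne, mu, ?_⟩
  set p := D.min' hne with hp
  set t := D.max' hne with ht
  have hpt : t + 1 - p = n := by
    have := D.min'_le_max' hne
    rw [hDI, Int.card_Icc] at hDc
    omega
  have hDmem : ∀ k, k ∈ D ↔ p ≤ k ∧ k < p + n := by
    intro k; rw [hDI, Finset.mem_Icc]; omega
  ext ⟨r, c⟩
  rw [mem_tile (base_le_hgt mu)]
  constructor
  · intro h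
    have := (hDmem ((c : ℤ) - r)).1 (Finset.mem_image.2 ⟨(r, c), h, rfl⟩)
    exact ⟨this.1, this.2, hR' _ h⟩
  · rintro ⟨k1, k2, k3⟩
    obtain ⟨⟨r', c'⟩, hm, e⟩ := Finset.mem_image.1 ((hDmem ((c : ℤ) - r)).2 ⟨k1, k2⟩)
    have i := hR' _ hm
    simp only at i e
    rw [e] at i
    have e1 : r = r' := by omega
    have e2 : c = c' := by omega
    rw [e1, e2]; exact hm

/-- The cell of largest content is the only topright-most cell. -/
theorem topRight_tile {n : ℕ} (hn : 1 ≤ n) {p : ℤ} {g : ℤ → ℤ} (hg : ∀ k, base k ≤ g k)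
    (hh : IsHgt g) (c : Cell) :
    TopRightCell (tile n p g) c ↔
      ((c.1 : ℤ) = g (p + n - 1) ∧ (c.2 : ℤ) = g (p + n - 1) + (p + n - 1)) := by
  have hb := hg (p + n - 1)
  unfold base at hb
  obtain ⟨a, ha⟩ := Int.eq_ofNat_of_zero_le (show 0 ≤ g (p + n - 1) by omega)
  obtain ⟨b, hb⟩ := Int.eq_ofNat_of_zero_le (show 0 ≤ g (p + n - 1) + (p + n - 1) by omega)
  have hab : (a, b) ∈ tile n p g := by
    rw [mem_tile hg, show (b : ℤ) - a = p + n - 1 by omega]; omega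
  have hmax : ∀ d ∈ tile n p g, d.2 ≤ b ∧ (d.2 = b → a ≤ d.1) := by
    rintro ⟨r, c⟩ hd
    rw [mem_tile hg] at hd
    have := hh.le (show (c : ℤ) - r ≤ p + n - 1 by omega)
    simp only
    omega
  constructor
  · rintro ⟨h1, h2⟩
    have i1 := h2 _ hab
    have i2 := hmax _ h1
    simp only at i1
    omega
  · rintro ⟨h1, h2⟩
    have e : c = (a, b) := by ext <;> simp only <;> omega
    rw [e]
    exact ⟨hab, hmax⟩

theorem ribbonSpin_tile {n : ℕ} (hn : 1 ≤ n) {p : ℤ} {g : ℤ → ℤ} (hg : ∀ k, base k ≤ g k)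
    (hh : IsHgt g) : ribbonSpin (tile n p g) = (g p - g (p + n - 1)).toNat := by
  have hI : (tile n p g).image Prod.fst =
      Finset.Icc (g (p + n - 1)).toNat (g p).toNat := by
    ext r
    rw [Finset.mem_Icc, tile, Finset.image_image, Finset.mem_image]
    simp only [Function.comp, Finset.mem_Ico]
    constructor
    · rintro ⟨k, ⟨h1, h2⟩, rfl⟩
      have i1 := hh.le h1
      have i2 := hh.le (show k ≤ p + n - 1 by omega)
      omega
    · rintro ⟨h1, h2⟩
      -- discrete intermediate value theorem, starting from the end of the interval
      have key : ∀ d : ℕ, (d : ℤ) < n → (r : ℤ) ≤ g (p + n - 1 - d) →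
          ∃ k, (p ≤ k ∧ k < p + n) ∧ (g k).toNat = r := by
        intro d
        induction d with
        | zero =>
          intro _ h
          refine ⟨p + n - 1, by omega, ?_⟩
          simp only [Nat.cast_zero, sub_zero] at h
          omega
        | succ d ih =>
          intro hd h
          by_cases h' : (r : ℤ) ≤ g (p + n - 1 - d)
          · exact ih (by push_cast at hd; omega) h'
          · refine ⟨p + n - 1 - ((d + 1 : ℕ) : ℤ), by push_cast at *; omega, ?_⟩
            have := hh (p + n - 1 - ((d + 1 : ℕ) : ℤ))
            rw [show p + n - 1 - ((d + 1 : ℕ) : ℤ) + 1 = p + n - 1 - d by push_cast; ring] at this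
            omega
      have hp := hg p
      unfold base at hp
      refine key (n - 1) (by omega) ?_
      rw [show p + n - 1 - ((n - 1 : ℕ) : ℤ) = p by omega]
      omega
  have h1 := hg p
  have h2 := hg (p + n - 1)
  have h3 := hh.le (show p ≤ p + n - 1 by omega)
  unfold base at *
  rw [ribbonSpin, hI, Nat.card_Icc]
  omega

/-! ### Horizontal ribbon strips and their sets of tails -/

/-- The number of ribbons of size `n` with tails in `P` that meet the diagonal of content `k`. -/
noncomputable def cov (n : ℕ) (P : Finset ℤ) (k : ℤ) : ℤ :=
  ((P.filter fun p => k - n < p ∧ p ≤ k).card : ℤ)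

/-- The rows of the cells of the ribbon with tail `p` in the horizontal strip over `μ` with set of
tails `P`: the ribbons with smaller tails lie to the north-west of it. -/
noncomputable def lev (n : ℕ) (μ : YoungDiagram) (P : Finset ℤ) (p k : ℤ) : ℤ :=
  hgt μ k + cov n (P.filter fun p' => p' < p) k

/-- `P` is the set of tails of a horizontal `n`-ribbon strip of shape `ν/μ`. -/
def Valid (n : ℕ) (μ ν : YoungDiagram) (P : Finset ℤ) : Prop :=
  (∀ p ∈ P, hgt μ (p + n - 1) = hgt μ (p + n)) ∧ ∀ k, hgt ν k = hgt μ k + cov n P k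

/-- The ribbons of the horizontal strip over `μ` with set of tails `P`. -/
noncomputable def tiles (n : ℕ) (μ : YoungDiagram) (P : Finset ℤ) : Finset (Finset Cell) :=
  P.image fun p => tile n p (lev n μ P p)

theorem cov_nonneg (n : ℕ) (P : Finset ℤ) (k : ℤ) : 0 ≤ cov n P k := Nat.cast_nonneg _

theorem cov_mono (n : ℕ) {P Q : Finset ℤ} (h : P ⊆ Q) (k : ℤ) : cov n P k ≤ cov n Q k :=
  Nat.cast_le.2 (Finset.card_le_card (Finset.filter_subset_filter _ h))

theorem cov_insert (n : ℕ) {P : Finset ℤ} {p : ℤ} (h : p ∉ P) (k : ℤ) :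
    cov n (insert p P) k = cov n P k + if p ≤ k ∧ k < p + n then 1 else 0 := by
  unfold cov
  rw [Finset.filter_insert]
  by_cases hp : k - n < p ∧ p ≤ k
  · rw [if_pos hp, if_pos (by omega), Finset.card_insert_of_notMem (by simp [h])]
    push_cast; ring
  · rw [if_neg hp, if_neg (by omega), add_zero]

theorem cov_step {n : ℕ} (hn : 1 ≤ n) (P : Finset ℤ) (k : ℤ) :
    cov n P k + (if k - n ∈ P then 1 else 0) = cov n P (k - 1) + if k ∈ P then 1 else 0 := by
  induction P using Finset.induction_on with
  | empty => simp [cov]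
  | insert p P hp ih =>
    rw [cov_insert n hp, cov_insert n hp]
    have e1 : (if k - n ∈ insert p P then (1 : ℤ) else 0) =
        (if k - n ∈ P then 1 else 0) + if k - n = p then 1 else 0 := by
      simp only [Finset.mem_insert]
      by_cases h1 : k - n = p
      · rw [h1]; simp [hp]
      · simp [h1]
    have e2 : (if k ∈ insert p P then (1 : ℤ) else 0) =
        (if k ∈ P then 1 else 0) + if k = p then 1 else 0 := by
      simp only [Finset.mem_insert]
      by_cases h1 : k = p
      · rw [h1]; simp [hp]
      · simp [h1]
    rw [e1, e2]
    have e3 : (if p ≤ k ∧ k < p + n then (1 : ℤ) else 0) + (if k - n = p then 1 else 0) =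
        (if p ≤ k - 1 ∧ k - 1 < p + n then 1 else 0) + if k = p then 1 else 0 := by
      split_ifs <;> omega
    omega

theorem base_le_lev (n : ℕ) (μ : YoungDiagram) (P : Finset ℤ) (p k : ℤ) :
    base k ≤ lev n μ P p k :=
  (base_le_hgt μ k).trans (le_add_of_nonneg_right (cov_nonneg _ _ _))

theorem lev_lt_lev {n : ℕ} {μ : YoungDiagram} {P : Finset ℤ} {p p' k : ℤ} (hp : p ∈ P)
    (h : p < p') (h1 : p ≤ k) (h2 : k < p + n) : lev n μ P p k < lev n μ P p' k := by
  have hs : insert p (P.filter fun a => a < p) ⊆ P.filter fun a => a < p' := by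
    intro a ha
    rw [Finset.mem_insert, Finset.mem_filter] at ha
    rw [Finset.mem_filter]
    rcases ha with rfl | ha
    · exact ⟨hp, h⟩
    · exact ⟨ha.1, ha.2.trans h⟩
  have := cov_mono n hs k
  rw [cov_insert n (by simp), if_pos ⟨h1, h2⟩] at this
  unfold lev
  omega

theorem lev_isHgt {n : ℕ} (hn : 1 ≤ n) {μ ν : YoungDiagram} {P : Finset ℤ} (hP : Valid n μ ν P)
    (p : ℤ) : IsHgt (lev n μ P p) := by
  intro k
  have s1 := cov_step hn (P.filter fun a => a < p) (k + 1)
  have s2 := cov_step hn P (k + 1)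
  have s3 := isHgt_hgt μ k
  have s4 := isHgt_hgt ν k
  rw [hP.2, hP.2] at s4
  have s5 := hP.1 (k + 1 - n)
  rw [show k + 1 - n + n - 1 = k by ring, show k + 1 - n + n = k + 1 by ring] at s5
  rw [add_sub_cancel_right] at s1 s2
  simp only [Finset.mem_filter] at s1
  unfold lev
  by_cases h1 : k + 1 ∈ P <;> by_cases h2 : k + 1 - n ∈ P <;> by_cases h3 : k + 1 < p <;>
    by_cases h4 : k + 1 - n < p <;> simp [h1, h2, h3, h4] at s1 s2 s5 <;> omega

theorem exists_lev {n : ℕ} (hn : 1 ≤ n) {μ ν : YoungDiagram} {P : Finset ℤ} (hP : Valid n μ ν P)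
    (p : ℤ) : ∃ κ : YoungDiagram, ∀ k, hgt κ k = lev n μ P p k :=
  exists_of_hgt ν _ (lev_isHgt hn hP p) (base_le_lev n μ P p) fun k => by
    rw [hP.2]
    exact add_le_add_right (cov_mono n (Finset.filter_subset _ _) k) _

theorem lev_succ {n : ℕ} {μ : YoungDiagram} {P : Finset ℤ} {p : ℤ} (hp : p ∈ P) (k : ℤ) :
    lev n μ P (p + 1) k = lev n μ P p k + if p ≤ k ∧ k < p + n then 1 else 0 := by
  have e : (P.filter fun a => a < p + 1) = insert p (P.filter fun a => a < p) := by
    ext a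
    rw [Finset.mem_insert, Finset.mem_filter, Finset.mem_filter, Int.lt_add_one_iff, le_iff_lt_or_eq]
    constructor
    · rintro ⟨h1, h2 | h2⟩
      · exact Or.inr ⟨h1, h2⟩
      · exact Or.inl h2
    · rintro (rfl | h)
      · exact ⟨hp, Or.inr rfl⟩
      · exact ⟨h.1, Or.inl h.2⟩
  unfold lev
  rw [e, cov_insert n (by simp)]
  ring

theorem lev_head {n : ℕ} (μ : YoungDiagram) (P : Finset ℤ) (p : ℤ) :
    lev n μ P p (p + n - 1) = hgt μ (p + n - 1) := by
  unfold lev cov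
  rw [add_eq_left, Nat.cast_eq_zero, Finset.card_eq_zero, Finset.filter_filter,
    Finset.filter_eq_empty_iff]
  intro a _ h
  omega

theorem mem_diff_iff (μ ν : YoungDiagram) (r c : ℕ) :
    (r, c) ∈ ν.cells \ μ.cells ↔
      hgt μ ((c : ℤ) - r) ≤ r ∧ (r : ℤ) < hgt ν ((c : ℤ) - r) := by
  simp only [Finset.mem_sdiff, YoungDiagram.mem_cells, mem_iff_lt_hgt]
  omega

theorem tile_injOn {n : ℕ} (hn : 1 ≤ n) (μ : YoungDiagram) (P : Finset ℤ) :
    Set.InjOn (fun p => tile n p (lev n μ P p)) P := by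
  -- the tail is the smallest content of a cell
  have key : ∀ p p' : ℤ, tile n p (lev n μ P p) = tile n p' (lev n μ P p') → p' ≤ p := by
    intro p p' h
    have hb := base_le_lev n μ P p p
    unfold base at hb
    obtain ⟨a, ha⟩ := Int.eq_ofNat_of_zero_le (show 0 ≤ lev n μ P p p by omega)
    obtain ⟨b, hb⟩ := Int.eq_ofNat_of_zero_le (show 0 ≤ lev n μ P p p + p by omega)
    have h1 : (a, b) ∈ tile n p (lev n μ P p) := by
      rw [mem_tile (base_le_lev n μ P p), show (b : ℤ) - a = p by omega]; omega
    rw [h, mem_tile (base_le_lev n μ P p')] at h1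
    omega
  intro p _ p' _ h
  exact le_antisymm (key _ _ h.symm) (key _ _ h)

theorem tiles_card {n : ℕ} (hn : 1 ≤ n) (μ : YoungDiagram) (P : Finset ℤ) :
    (tiles n μ P).card = P.card := Finset.card_image_of_injOn (tile_injOn hn μ P)

/-- A valid set of tails gives a horizontal ribbon strip. -/
theorem Valid.isHStripTiling {n : ℕ} (hn : 1 ≤ n) {μ ν : YoungDiagram} {P : Finset ℤ}
    (hP : Valid n μ ν P) : IsHStripTiling n (ν.cells \ μ.cells) (tiles n μ P) := by
  have hdisj : ∀ p ∈ P, ∀ p' ∈ P, p < p' →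
      Disjoint (tile n p (lev n μ P p)) (tile n p' (lev n μ P p')) := by
    intro p hp p' _ hlt
    rw [Finset.disjoint_left]
    rintro ⟨r, c⟩ h1 h2
    rw [mem_tile (base_le_lev _ _ _ _)] at h1 h2
    have := lev_lt_lev (n := n) (μ := μ) hp hlt h1.1 h1.2.1
    omega
  refine ⟨⟨?_, ?_, ?_⟩, ?_⟩
  · intro R hR
    obtain ⟨p, hp, rfl⟩ := Finset.mem_image.1 hR
    obtain ⟨κ, hκ⟩ := exists_lev hn hP p
    obtain ⟨κ₁, hκ'⟩ := exists_lev hn hP (p + 1)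
    rw [show lev n μ P p = hgt κ from (funext hκ).symm]
    exact tile_isRibbon (κ₁ := κ₁) fun k => by rw [hκ', hκ, lev_succ hp]
  · intro A hA B hB hAB
    obtain ⟨p, hp, rfl⟩ := Finset.mem_image.1 hA
    obtain ⟨p', hp', rfl⟩ := Finset.mem_image.1 hB
    rcases lt_trichotomy p p' with h | h | h
    · exact hdisj p hp p' hp' h
    · exact absurd (by rw [h]) hAB
    · exact (hdisj p' hp' p hp h).symm
  · ext ⟨r, c⟩
    rw [mem_diff_iff, Finset.mem_biUnion]
    simp only [tiles, Finset.mem_image, id]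
    set k : ℤ := (c : ℤ) - r with hk
    constructor
    · rintro ⟨_, ⟨p, hp, rfl⟩, h⟩
      rw [mem_tile (base_le_lev _ _ _ _), ← hk] at h
      have h1 := cov_nonneg n (P.filter fun a => a < p) k
      have h2 := lev_succ (n := n) (μ := μ) hp k
      rw [if_pos ⟨h.1, h.2.1⟩] at h2
      have h3 := cov_mono n (Finset.filter_subset (fun a => a < p + 1) P) k
      rw [hP.2]
      unfold lev at *
      omega
    · rintro ⟨h1, h2⟩
      -- the rows of the cells on this diagonal are distinct, hence fill the whole interval
      set C := P.filter fun p => k - n < p ∧ p ≤ k with hC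
      have hmemC : ∀ p, p ∈ C ↔ p ∈ P ∧ p ≤ k ∧ k < p + n := by
        intro p; rw [hC, Finset.mem_filter]; constructor <;> rintro ⟨i, j⟩ <;> exact ⟨i, by omega⟩
      have hinj : Set.InjOn (fun p => lev n μ P p k) C := by
        intro p hp p' hp' e
        have hp := (hmemC p).1 hp
        have hp' := (hmemC p').1 hp'
        have e : lev n μ P p k = lev n μ P p' k := e
        rcases lt_trichotomy p p' with h | h | h
        · have := lev_lt_lev (n := n) (μ := μ) hp.1 h hp.2.1 hp.2.2; omega
        · exact h
        · have := lev_lt_lev (n := n) (μ := μ) hp'.1 h hp'.2.1 hp'.2.2; omega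
      have hsub : C.image (fun p => lev n μ P p k) ⊆ Finset.Ico (hgt μ k) (hgt ν k) := by
        intro a ha
        obtain ⟨p, hp, rfl⟩ := Finset.mem_image.1 ha
        have hp := (hmemC p).1 hp
        have h1 := cov_nonneg n (P.filter fun a => a < p) k
        have h2 := lev_succ (n := n) (μ := μ) hp.1 k
        rw [if_pos hp.2] at h2
        have h3 := cov_mono n (Finset.filter_subset (fun a => a < p + 1) P) k
        rw [Finset.mem_Ico, hP.2]
        unfold lev at *
        omega
      have heq := Finset.eq_of_subset_of_card_le hsub (by
        rw [Finset.card_image_of_injOn hinj, Int.card_Ico, hP.2]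
        unfold cov
        rw [← hC]
        omega)
      have hr : (r : ℤ) ∈ Finset.Ico (hgt μ k) (hgt ν k) := Finset.mem_Ico.2 ⟨h1, h2⟩
      rw [← heq] at hr
      obtain ⟨p, hp, e⟩ := Finset.mem_image.1 hr
      have hp := (hmemC p).1 hp
      refine ⟨_, ⟨p, hp.1, rfl⟩, ?_⟩
      rw [mem_tile (base_le_lev _ _ _ _), ← hk]
      exact ⟨hp.2.1, hp.2.2, e.symm⟩
  · intro R hR c hc
    obtain ⟨p, hp, rfl⟩ := Finset.mem_image.1 hR
    rw [topRight_tile hn (base_le_lev _ _ _ _) (lev_isHgt hn hP p), lev_head] at hc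
    by_cases h0 : c.1 = 0
    · exact Or.inl h0
    · right
      have := hP.1 p hp
      rw [mem_diff_iff, show (c.2 : ℤ) - ((c.1 - 1 : ℕ) : ℤ) = p + n by omega]
      omega

/-- Every horizontal ribbon strip comes from a valid set of tails. -/
theorem exists_valid {n : ℕ} (hn : 1 ≤ n) {μ ν : YoungDiagram} (hμν : μ ≤ ν)
    {T : Finset (Finset Cell)} (hT : IsHStripTiling n (ν.cells \ μ.cells) T) :
    ∃ P, Valid n μ ν P ∧ T = tiles n μ P := by
  obtain ⟨⟨hrib, hdisj, hun⟩, hnorth⟩ := hT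
  choose! tl κ htile using fun R (hR : R ∈ T) => isRibbon_tile hn (hrib R hR)
  have hμν' := (le_iff_hgt _ _).1 hμν
  have hmem : ∀ R ∈ T, ∀ r c : ℕ, (r, c) ∈ R ↔ tl R ≤ (c : ℤ) - r ∧ (c : ℤ) - r < tl R + n ∧
      (r : ℤ) = hgt (κ R) ((c : ℤ) - r) := by
    intro R hR r c
    conv_lhs => rw [htile R hR]
    exact mem_tile (base_le_hgt _) r c
  -- the cell of `R` on the diagonal `k`
  have hcell : ∀ R ∈ T, ∀ k, tl R ≤ k → k < tl R + n → ∃ r c : ℕ, (r, c) ∈ R ∧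
      (c : ℤ) - r = k ∧ (r : ℤ) = hgt (κ R) k := by
    intro R hR k h1 h2
    obtain ⟨a, ha⟩ := Int.eq_ofNat_of_zero_le (hgt_nonneg (κ R) k)
    obtain ⟨b, hb⟩ := Int.eq_ofNat_of_zero_le (hgt_add_nonneg (κ R) k)
    have e : (b : ℤ) - a = k := by omega
    refine ⟨a, b, ?_, e, by omega⟩
    rw [hmem R hR, e]; omega
  have hsub : ∀ R ∈ T, ∀ r c : ℕ, (r, c) ∈ R →
      hgt μ ((c : ℤ) - r) ≤ r ∧ (r : ℤ) < hgt ν ((c : ℤ) - r) := by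
    intro R hR r c h
    rw [← mem_diff_iff, ← hun]
    exact Finset.mem_biUnion.2 ⟨R, hR, h⟩
  have hrange : ∀ R ∈ T, ∀ k, tl R ≤ k → k < tl R + n →
      hgt μ k ≤ hgt (κ R) k ∧ hgt (κ R) k < hgt ν k := by
    intro R hR k h1 h2
    obtain ⟨r, c, h3, h4, h5⟩ := hcell R hR k h1 h2
    have := hsub R hR r c h3
    rw [h4] at this; omega
  have hne : ∀ R ∈ T, ∀ R' ∈ T, R ≠ R' → ∀ k, tl R ≤ k → k < tl R + n → tl R' ≤ k →
      k < tl R' + n → hgt (κ R) k ≠ hgt (κ R') k := by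
    intro R hR R' hR' hRR k h1 h2 h3 h4 e
    obtain ⟨r, c, i1, i2, i3⟩ := hcell R hR k h1 h2
    refine Finset.disjoint_left.1 (hdisj hR hR' hRR) i1 ?_
    rw [hmem R' hR', i2]; omega
  -- the head of each ribbon lies on the boundary of `μ`
  have hhead : ∀ R ∈ T, hgt (κ R) (tl R + n - 1) = hgt μ (tl R + n - 1) ∧
      hgt μ (tl R + n - 1) = hgt μ (tl R + n) := by
    intro R hR
    obtain ⟨r, c, h1, h2, h3⟩ := hcell R hR (tl R + n - 1) (by omega) (by omega)
    have h4 := hsub R hR r c h1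
    rw [h2] at h4
    have h5 := isHgt_hgt μ (tl R + n - 1)
    have h6 := isHgt_hgt ν (tl R + n - 1)
    rw [sub_add_cancel] at h5 h6
    have h7 := hgt_nonneg μ (tl R + n)
    have htop : TopRightCell R (r, c) := by
      rw [htile R hR, topRight_tile hn (base_le_hgt _) (isHgt_hgt _)]
      simp only
      omega
    rcases hnorth R hR _ htop with h | h
    · simp only at h; omega
    · simp only at h
      by_cases h0 : r = 0
      · omega
      · rw [mem_diff_iff, show (c : ℤ) - ((r - 1 : ℕ) : ℤ) = tl R + n by omega] at h
        omega
  have htlinj : Set.InjOn tl T := by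
    intro R hR R' hR' e
    by_contra hRR
    refine hne R hR R' hR' hRR (tl R + n - 1) (by omega) (by omega) (by omega) (by omega) ?_
    have hhead_second := (hhead R' hR').1
    rw [(hhead R hR).1, e, hhead_second]
  -- on a common diagonal, ribbons are ordered by their tails
  have horder : ∀ R ∈ T, ∀ R' ∈ T, tl R' < tl R → ∀ k, tl R ≤ k → k < tl R' + n →
      hgt (κ R') k < hgt (κ R) k := by
    intro R hR R' hR' hlt
    have hRR : R' ≠ R := by rintro rfl; exact lt_irrefl _ hlt
    have key : ∀ d : ℕ, tl R ≤ tl R' + n - 1 - d →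
        hgt (κ R') (tl R' + n - 1 - d) < hgt (κ R) (tl R' + n - 1 - d) := by
      intro d
      induction d with
      | zero =>
        intro h
        rw [Nat.cast_zero, sub_zero] at *
        have h1 := hne R' hR' R hR hRR (tl R' + n - 1) (by omega) (by omega) (by omega) (by omega)
        have h2 := hrange R hR (tl R' + n - 1) (by omega) (by omega)
        have h3 := (hhead R' hR').1
        omega
      | succ d ih =>
        intro h
        set k := tl R' + n - 1 - ((d + 1 : ℕ) : ℤ) with hk
        have hk' : tl R' + n - 1 - (d : ℤ) = k + 1 := by rw [hk]; push_cast; ring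
        rw [hk'] at ih
        push_cast at hk
        have h0 := ih (by omega)
        have h1 := hne R' hR' R hR hRR k (by omega) (by omega) (by omega) (by omega)
        have h2 := isHgt_hgt (κ R) k
        have h3 := isHgt_hgt (κ R') k
        omega
    intro k h1 h2
    obtain ⟨d, hd⟩ := Int.eq_ofNat_of_zero_le (show 0 ≤ tl R' + n - 1 - k by omega)
    have := key d (by omega)
    rwa [show tl R' + n - 1 - (d : ℤ) = k by omega] at this
  -- counting the cells above a given row
  have hcount : ∀ (k u : ℤ) (Q : Finset ℤ), hgt μ k ≤ u → u ≤ hgt ν k →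
      (∀ R ∈ T, tl R ≤ k → k < tl R + n → (tl R ∈ Q ↔ hgt (κ R) k < u)) → Q ⊆ T.image tl →
      u = hgt μ k + cov n Q k := by
    intro k u Q hu1 hu hQ hQT
    have hc : ((Finset.Ico (hgt μ k) u).card : ℤ) = cov n Q k := by
      unfold cov
      rw [Nat.cast_inj]
      set A := T.filter fun R => tl R ≤ k ∧ k < tl R + n ∧ tl R ∈ Q with hA
      have e1 : Finset.Ico (hgt μ k) u = A.image fun R => hgt (κ R) k := by
        ext a
        rw [Finset.mem_Ico, Finset.mem_image]
        constructor
        · rintro ⟨h1, h2⟩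
          have hb := base_le_hgt μ k
          unfold base at hb
          obtain ⟨r, hr⟩ := Int.eq_ofNat_of_zero_le (show 0 ≤ a by omega)
          obtain ⟨c, hc⟩ := Int.eq_ofNat_of_zero_le (show 0 ≤ a + k by omega)
          have e : (c : ℤ) - r = k := by omega
          have hS : (r, c) ∈ ν.cells \ μ.cells := by rw [mem_diff_iff, e]; omega
          rw [← hun] at hS
          obtain ⟨R, hR, hS⟩ := Finset.mem_biUnion.1 hS
          have := (hmem R hR r c).1 hS
          rw [e] at this
          refine ⟨R, Finset.mem_filter.2 ⟨hR, this.1, this.2.1, ?_⟩, by omega⟩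
          exact (hQ R hR this.1 this.2.1).2 (by omega)
        · rintro ⟨R, hR, rfl⟩
          obtain ⟨hR, h1, h2, h3⟩ := Finset.mem_filter.1 hR
          exact ⟨(hrange R hR k h1 h2).1, (hQ R hR h1 h2).1 h3⟩
      have e2 : (Q.filter fun p => k - n < p ∧ p ≤ k) = A.image tl := by
        ext p
        rw [Finset.mem_filter, Finset.mem_image]
        constructor
        · rintro ⟨h1, h2, h3⟩
          obtain ⟨R, hR, rfl⟩ := Finset.mem_image.1 (hQT h1)
          exact ⟨R, Finset.mem_filter.2 ⟨hR, h3, by omega, h1⟩, rfl⟩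
        · rintro ⟨R, hR, rfl⟩
          obtain ⟨hR, h1, h2, h3⟩ := Finset.mem_filter.1 hR
          exact ⟨h3, by omega, h1⟩
      have hAT : (A : Set (Finset Cell)) ⊆ T := Finset.coe_subset.2 (Finset.filter_subset _ _)
      rw [e1, e2, Finset.card_image_of_injOn (htlinj.mono hAT), Finset.card_image_of_injOn]
      intro R hR R' hR' e
      obtain ⟨hR, h1, h2, -⟩ := Finset.mem_filter.1 hR
      obtain ⟨hR', h1', h2', -⟩ := Finset.mem_filter.1 hR'
      by_contra hRR
      exact hne R hR R' hR' hRR k h1 h2 h1' h2' e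
    rw [Int.card_Ico] at hc
    omega
  refine ⟨T.image tl, ⟨?_, ?_⟩, ?_⟩
  · intro p hp
    obtain ⟨R, hR, rfl⟩ := Finset.mem_image.1 hp
    exact (hhead R hR).2
  · intro k
    refine hcount k _ _ (hμν' k) le_rfl (fun R hR h1 h2 => ?_) subset_rfl
    exact iff_of_true (Finset.mem_image_of_mem _ hR) (hrange R hR k h1 h2).2
  · have key : ∀ R ∈ T, tile n (tl R) (lev n μ (T.image tl) (tl R)) = R := by
      intro R hR
      conv_rhs => rw [htile R hR]
      refine tile_congr fun k h1 h2 => ?_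
      symm
      refine hcount k _ _ (hrange R hR k h1 h2).1 (hrange R hR k h1 h2).2.le
        (fun R' hR' h1' h2' => ?_) (Finset.filter_subset _ _)
      rw [Finset.mem_filter]
      constructor
      · rintro ⟨-, h⟩
        exact horder R hR R' hR' h k h1 h2'
      · intro h
        refine ⟨Finset.mem_image_of_mem _ hR', ?_⟩
        by_contra hlt
        rcases (not_lt.1 hlt).lt_or_eq with h' | h'
        · have := horder R' hR' R hR h' k h1' h2
          omega
        · have := htlinj hR hR' h'
          rw [this] at h
          exact lt_irrefl _ h
    rw [tiles, Finset.image_image]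
    ext R
    rw [Finset.mem_image]
    constructor
    · exact fun hR => ⟨R, hR, key R hR⟩
    · rintro ⟨R', hR', rfl⟩
      simp only [Function.comp]
      rwa [key R' hR']

/-! ### The generating function of the horizontal strips of a given shape -/

theorem tile_tail {n : ℕ} (hn : 1 ≤ n) {p p' : ℤ} {g g' : ℤ → ℤ} (hg : ∀ k, base k ≤ g k)
    (hg' : ∀ k, base k ≤ g' k) (h : tile n p g = tile n p' g') : p' ≤ p := by
  have hb := hg p
  unfold base at hb
  obtain ⟨a, ha⟩ := Int.eq_ofNat_of_zero_le (show 0 ≤ g p by omega)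
  obtain ⟨b, hb⟩ := Int.eq_ofNat_of_zero_le (show 0 ≤ g p + p by omega)
  have h1 : (a, b) ∈ tile n p g := by
    rw [mem_tile hg, show (b : ℤ) - a = p by omega]; omega
  rw [h, mem_tile hg'] at h1
  omega

theorem tiles_injective {n : ℕ} (hn : 1 ≤ n) (μ : YoungDiagram) :
    Function.Injective (tiles n μ) := by
  have key : ∀ P P' : Finset ℤ, tiles n μ P = tiles n μ P' → P ⊆ P' := by
    intro P P' h p hp
    have h1 : tile n p (lev n μ P p) ∈ tiles n μ P' := h ▸ Finset.mem_image_of_mem _ hp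
    obtain ⟨p', hp', e⟩ := Finset.mem_image.1 h1
    have e1 := tile_tail hn (base_le_lev _ _ _ _) (base_le_lev _ _ _ _) e
    have e2 := tile_tail hn (base_le_lev _ _ _ _) (base_le_lev _ _ _ _) e.symm
    rwa [le_antisymm e1 e2]
  exact fun P P' h => (key _ _ h).antisymm (key _ _ h.symm)

theorem Valid.le {n : ℕ} {μ ν : YoungDiagram} {P : Finset ℤ} (h : Valid n μ ν P) : μ ≤ ν :=
  (le_iff_hgt _ _).2 fun k => by have := h.2 k; have := cov_nonneg n P k; omega

/-- The sum of `q ^ spin * x ^ (number of ribbons)` over the horizontal `n`-ribbon strips of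
shape `ν/μ` (there is at most one). -/
noncomputable def W {R : Type*} [CommRing R] (n : ℕ) (q x : R) (μ ν : YoungDiagram) : R :=
  if μ ≤ ν then
    ∑ T ∈ (ν.cells \ μ.cells).powerset.powerset.filter
      (fun T => IsHStripTiling n (ν.cells \ μ.cells) T), q ^ tilingSpin T * x ^ T.card
  else 0

theorem mem_W_index {n : ℕ} {S : Finset Cell} {T : Finset (Finset Cell)} :
    T ∈ S.powerset.powerset.filter (fun T => IsHStripTiling n S T) ↔ IsHStripTiling n S T := by
  rw [Finset.mem_filter, and_iff_right_iff_imp]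
  rintro ⟨⟨-, -, h⟩, -⟩
  rw [Finset.mem_powerset]
  intro R hR
  rw [Finset.mem_powerset, ← h]
  exact Finset.subset_biUnion_of_mem id hR

theorem map_W {R R' : Type*} [CommRing R] [CommRing R'] (f : R →+* R') (n : ℕ) (q x : R)
    (μ ν : YoungDiagram) : f (W n q x μ ν) = W n (f q) (f x) μ ν := by
  unfold W
  split_ifs
  · simp only [map_sum, map_mul, map_pow]
  · exact map_zero f

theorem W_eq_sum {R : Type*} [CommRing R] {n : ℕ} (hn : 1 ≤ n) (q x : R) (μ ν : YoungDiagram)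
    (E : Finset ℤ) (hE : ∀ P, Valid n μ ν P → P ⊆ E) :
    W n q x μ ν = ∑ P ∈ E.powerset,
      if Valid n μ ν P then q ^ tilingSpin (tiles n μ P) * x ^ P.card else 0 := by
  by_cases hle : μ ≤ ν
  · rw [W, if_pos hle, ← Finset.sum_filter]
    symm
    refine Finset.sum_bij (fun P _ => tiles n μ P) ?_ ?_ ?_ ?_
    · intro P hP
      exact mem_W_index.2 ((Finset.mem_filter.1 hP).2.isHStripTiling hn)
    · intro P _ P' _ h
      exact tiles_injective hn μ h
    · intro T hT
      obtain ⟨P, hP, rfl⟩ := exists_valid hn hle (mem_W_index.1 hT)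
      exact ⟨P, Finset.mem_filter.2 ⟨Finset.mem_powerset.2 (hE P hP), hP⟩, rfl⟩
    · intro P _
      rw [tiles_card hn]
  · rw [W, if_neg hle]
    symm
    refine Finset.sum_eq_zero fun P _ => if_neg fun h => hle h.le

/-! ### Edge bits -/

/-- The bit of the edge of the boundary of `μ` between the diagonals `j - 1` and `j`: whether the
height drops there. -/
noncomputable def mb (μ : YoungDiagram) (j : ℤ) : Bool := decide (hgt μ j < hgt μ (j - 1))

theorem mb_toNat (μ : YoungDiagram) (j : ℤ) :
    ((mb μ j).toNat : ℤ) = hgt μ (j - 1) - hgt μ j := by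
  have := isHgt_hgt μ (j - 1)
  rw [sub_add_cancel] at this
  unfold mb
  by_cases h : hgt μ j < hgt μ (j - 1)
  · simp [h]; omega
  · simp [h]; omega

/-- The number of elements of `P` among the `n - 1` sites before `j`. -/
noncomputable def near (n : ℕ) (P : Finset ℤ) (j : ℤ) : ℕ :=
  (P.filter fun p => j - n < p ∧ p < j).card

theorem hgt_sub (μ : YoungDiagram) (p : ℤ) : ∀ d : ℕ,
    hgt μ p - hgt μ (p + d) = ∑ j ∈ Finset.Ioc p (p + d), ((mb μ j).toNat : ℤ) := by
  intro d
  induction d with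
  | zero => simp
  | succ d ih =>
    have e : Finset.Ioc p (p + ((d + 1 : ℕ) : ℤ)) = insert (p + d + 1) (Finset.Ioc p (p + d)) := by
      ext i; simp only [Finset.mem_Ioc, Finset.mem_insert]; push_cast; omega
    rw [e, Finset.sum_insert (by simp), ← ih, mb_toNat]
    rw [show p + ((d + 1 : ℕ) : ℤ) = p + d + 1 by push_cast; ring, add_sub_cancel_right]
    ring

theorem spin_tiles {n : ℕ} (hn : 1 ≤ n) {μ ν : YoungDiagram} {P : Finset ℤ} (hP : Valid n μ ν P)
    {a b : ℤ} (hab : ∀ p ∈ P, a ≤ p ∧ p + n ≤ b) :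
    tilingSpin (tiles n μ P) =
      ∑ j ∈ Finset.Ico a b, ((mb μ j).toNat + (decide (j ∈ P)).toNat) * near n P j := by
  have h1 : tilingSpin (tiles n μ P) =
      ∑ p ∈ P, (lev n μ P p p - lev n μ P p (p + n - 1)).toNat := by
    rw [tilingSpin, tiles, Finset.sum_image (tile_injOn hn μ P)]
    exact Finset.sum_congr rfl fun p _ =>
      ribbonSpin_tile hn (base_le_lev _ _ _ _) (lev_isHgt hn hP p)
  have h2 : ∀ p, ((lev n μ P p p - lev n μ P p (p + n - 1)).toNat : ℤ) =
      (∑ j ∈ Finset.Ico a b, if p < j ∧ j < p + n then ((mb μ j).toNat : ℤ) else 0) +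
        near n P p ∨ p ∉ P := by
    intro p
    by_cases hp : p ∈ P
    · left
      have i1 := (lev_isHgt hn hP p).le (show p ≤ p + n - 1 by omega)
      rw [Int.toNat_of_nonneg (by omega), lev_head, lev, ← Finset.sum_filter]
      have i2 := hgt_sub μ p (n - 1)
      rw [show p + ((n - 1 : ℕ) : ℤ) = p + n - 1 by omega] at i2
      have i3 : (Finset.Ico a b).filter (fun j => p < j ∧ j < p + n) =
          Finset.Ioc p (p + n - 1) := by
        have := hab p hp
        ext j; simp only [Finset.mem_filter, Finset.mem_Ico, Finset.mem_Ioc]; omega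
      have i4 : cov n (P.filter fun p' => p' < p) p = near n P p := by
        unfold cov near
        rw [Finset.filter_filter]
        congr 2
        ext a
        simp only [Finset.mem_filter]
        constructor <;> rintro ⟨i, j⟩ <;> exact ⟨i, by omega⟩
      rw [i3, ← i2, i4]
      ring
    · exact Or.inr hp
  have h3 : ((tilingSpin (tiles n μ P) : ℕ) : ℤ) =
      ∑ p ∈ P, ((∑ j ∈ Finset.Ico a b, if p < j ∧ j < p + n then ((mb μ j).toNat : ℤ) else 0) +
        near n P p) := by
    rw [h1, Nat.cast_sum]
    exact Finset.sum_congr rfl fun p hp => (h2 p).resolve_right (not_not.2 hp)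
  zify
  rw [h3, Finset.sum_add_distrib, Finset.sum_comm]
  simp only [add_mul]
  rw [Finset.sum_add_distrib]
  congr 1
  · refine Finset.sum_congr rfl fun j _ => ?_
    rw [← Finset.sum_filter, Finset.sum_const, near, nsmul_eq_mul, mul_comm]
    congr 3
    ext p
    simp only [Finset.mem_filter]
    constructor <;> rintro ⟨i, j⟩ <;> exact ⟨i, by omega⟩
  · have hsub : P ⊆ Finset.Ico a b := by
      intro p hp
      have := hab p hp
      rw [Finset.mem_Ico]; omega
    rw [← Finset.sum_subset hsub]
    · refine Finset.sum_congr rfl fun p hp => by simp [hp]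
    · intro p _ hp
      simp [hp]

theorem card_eq_sum {P E : Finset ℤ} (h : P ⊆ E) : P.card = ∑ j ∈ E, (decide (j ∈ P)).toNat := by
  rw [← Finset.sum_subset h]
  · rw [Finset.card_eq_sum_ones]
    exact Finset.sum_congr rfl fun p hp => by simp [hp]
  · intro p _ hp
    simp [hp]

/-! ### Two successive strips as a two-row vertex model -/

/-- The compatibility at one site of the bits `m`, `m'` of the inner and outer shape of a strip:
`s` says whether there is a tail `n` sites earlier, and `t` whether there is one at the site. -/
def Step (m m' s t : Bool) : Prop :=
  (m && s) = false ∧ m'.toNat + t.toNat = m.toNat + s.toNat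

theorem cov_eq_zero {n : ℕ} {P : Finset ℤ} {a b : ℤ} (hP : ∀ p ∈ P, a ≤ p ∧ p + n < b) {k : ℤ}
    (hk : k < a ∨ b ≤ k + 1) : cov n P k = 0 := by
  unfold cov
  rw [Nat.cast_eq_zero, Finset.card_eq_zero, Finset.filter_eq_empty_iff]
  intro p hp h
  have := hP p hp
  omega

theorem eq_add_cov {n : ℕ} (hn : 1 ≤ n) {P : Finset ℤ} {a b : ℤ}
    (hP : ∀ p ∈ P, a ≤ p ∧ p + n < b) {g h : ℤ → ℤ} (ha : ∀ k < a, h k = g k)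
    (hb : ∀ k, b ≤ k → h k = g k)
    (hs : ∀ j ∈ Finset.Ico a b, h (j - 1) - h j + (if j ∈ P then 1 else 0) =
      g (j - 1) - g j + if j - n ∈ P then 1 else 0) (k : ℤ) : h k = g k + cov n P k := by
  have key : ∀ d : ℕ, a - 1 + d < b → h (a - 1 + d) = g (a - 1 + d) + cov n P (a - 1 + d) := by
    intro d
    induction d with
    | zero =>
      intro _
      rw [Nat.cast_zero, add_zero, ha _ (by omega), cov_eq_zero hP (by omega), add_zero]
    | succ d ih =>
      intro hd
      push_cast at hd
      have i := ih (by omega)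
      have i2 := hs (a - 1 + (d + 1)) (Finset.mem_Ico.2 (by omega))
      have i3 := cov_step hn P (a - 1 + (d + 1))
      rw [show a - 1 + ((d : ℤ) + 1) - 1 = a - 1 + d by ring] at i2 i3
      push_cast
      omega
  rcases lt_or_ge k a with h1 | h1
  · rw [ha k h1, cov_eq_zero hP (by omega), add_zero]
  rcases lt_or_ge k b with h2 | h2
  · obtain ⟨d, hd⟩ := Int.eq_ofNat_of_zero_le (show 0 ≤ k - (a - 1) by omega)
    have := key d (by omega)
    rwa [show a - 1 + (d : ℤ) = k by omega] at this
  · rw [hb k h2, cov_eq_zero hP (by omega), add_zero]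

theorem decide_toNat (p : Prop) [Decidable p] :
    ((decide p).toNat : ℤ) = if p then 1 else 0 := by
  by_cases h : p <;> simp [h]

theorem valid_iff {n : ℕ} (hn : 1 ≤ n) {μ ν : YoungDiagram} {P : Finset ℤ} {a b : ℤ}
    (hP : ∀ p ∈ P, a ≤ p ∧ p + n < b) (ha : ∀ k < a, hgt ν k = hgt μ k)
    (hb : ∀ k, b ≤ k → hgt ν k = hgt μ k) :
    Valid n μ ν P ↔ ∀ j ∈ Finset.Ico a b,
      Step (mb μ j) (mb ν j) (decide (j - n ∈ P)) (decide (j ∈ P)) := by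
  have hz : ∀ j, (mb ν j).toNat + (decide (j ∈ P)).toNat =
      (mb μ j).toNat + (decide (j - n ∈ P)).toNat ↔
      hgt ν (j - 1) - hgt ν j + (if j ∈ P then 1 else 0) =
        hgt μ (j - 1) - hgt μ j + if j - n ∈ P then 1 else 0 := by
    intro j
    zify
    rw [mb_toNat, mb_toNat, decide_toNat, decide_toNat]
  constructor
  · rintro ⟨h1, h2⟩ j _
    refine ⟨?_, (hz j).2 ?_⟩
    · by_cases h : j - n ∈ P
      · have := h1 _ h
        rw [show j - n + n - 1 = j - 1 by ring, sub_add_cancel] at this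
        simp [mb, this]
      · simp [h]
    · have := cov_step hn P j
      rw [h2, h2]
      omega
  · intro h
    refine ⟨fun p hp => ?_, eq_add_cov hn hP ha hb fun j hj => (hz j).1 (h j hj).2⟩
    have h1 := hP p hp
    have h2 := (h (p + n) (Finset.mem_Ico.2 (by omega))).1
    rw [add_sub_cancel_right, decide_eq_true hp, Bool.and_true] at h2
    have h3 := mb_toNat μ (p + n)
    rw [h2] at h3
    simp only [Bool.toNat_false, Nat.cast_zero] at h3
    omega

theorem valid_bound {n : ℕ} (hn : 1 ≤ n) {μ ν : YoungDiagram} {P : Finset ℤ} {M : ℕ}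
    (hμ : ∀ k : ℤ, ((M : ℤ) ≤ k → hgt μ k = 0) ∧ (k ≤ -M → hgt μ k = -k))
    (hν : ∀ k : ℤ, ((M : ℤ) ≤ k → hgt ν k = 0) ∧ (k ≤ -M → hgt ν k = -k))
    (hP : Valid n μ ν P) : ∀ p ∈ P, -(M : ℤ) ≤ p ∧ p + n < M + 1 := by
  intro p hp
  have key : ∀ k, p ≤ k → k < p + n → -(M : ℤ) < k ∧ k < M := by
    intro k h1 h2
    have h3 : 0 < cov n P k := by
      unfold cov
      rw [Nat.cast_pos, Finset.card_pos]
      exact ⟨p, Finset.mem_filter.2 ⟨hp, by omega⟩⟩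
    have h4 := hP.2 k
    have h5 := hμ k
    have h6 := hν k
    omega
  have h1 := key p (by omega) (by omega)
  have h2 := key (p + n - 1) (by omega) (by omega)
  omega

theorem countP_win_fst (k : ℕ) (j : ℤ) (P₁ P₂ : Finset ℤ) :
    (win k j P₁ P₂).countP (fun a => a.1) = near (k + 1) P₁ j := by
  induction k with
  | zero =>
    simp only [win, near, List.range_zero, List.map_nil, List.countP_nil]
    symm
    rw [Finset.card_eq_zero, Finset.filter_eq_empty_iff]
    intro p _ h
    push_cast at h
    omega
  | succ k ih =>
    rw [win_dropLast, List.countP_append, ih, List.countP_singleton]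
    unfold near
    by_cases h : j - 1 - k ∈ P₁
    · have e : (P₁.filter fun p => j - ((k + 1 + 1 : ℕ) : ℤ) < p ∧ p < j) =
          insert (j - 1 - k) (P₁.filter fun p => j - ((k + 1 : ℕ) : ℤ) < p ∧ p < j) := by
        ext p
        simp only [Finset.mem_insert, Finset.mem_filter]
        push_cast
        constructor
        · rintro ⟨i1, i2⟩
          by_cases hp : p = j - 1 - k
          · exact Or.inl hp
          · exact Or.inr ⟨i1, by omega⟩
        · rintro (rfl | i)
          · exact ⟨h, by omega⟩
          · exact ⟨i.1, by omega⟩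
      rw [e, Finset.card_insert_of_notMem]
      · simp [stf, h]
      · intro h'
        have := (Finset.mem_filter.1 h').2
        push_cast at this
        omega
    · have e : (P₁.filter fun p => j - ((k + 1 + 1 : ℕ) : ℤ) < p ∧ p < j) =
          P₁.filter fun p => j - ((k + 1 : ℕ) : ℤ) < p ∧ p < j := by
        refine Finset.filter_congr fun p hp => ?_
        have : p ≠ j - 1 - k := fun e => h (e ▸ hp)
        push_cast
        omega
      rw [e]
      simp [stf, h]

theorem countP_win_snd (k : ℕ) (j : ℤ) (P₁ P₂ : Finset ℤ) :
    (win k j P₁ P₂).countP (fun a => a.2) = near (k + 1) P₂ j := by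
  rw [← countP_win_fst k j P₂ P₁]
  unfold win
  rw [List.countP_map, List.countP_map]
  rfl

theorem stepWt_eq (q x y : K) (m m' m'' : Bool) (w : List St) (s t : St)
    (h₁ : Step m m' s.1 t.1) (h₂ : Step m' m'' s.2 t.2) :
    stepWt q x y m m'' w s t =
      q ^ ((m.toNat + t.1.toNat) * w.countP (fun a => a.1) +
        (m'.toNat + t.2.toNat) * w.countP (fun a => a.2)) * x ^ t.1.toNat * y ^ t.2.toNat := by
  obtain ⟨s₁, s₂⟩ := s
  obtain ⟨t₁, t₂⟩ := t
  revert h₁ h₂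
  cases m <;> cases m' <;> cases m'' <;> cases s₁ <;> cases s₂ <;> cases t₁ <;> cases t₂ <;>
    simp [Step, stepWt]

theorem stepWt_ne_zero {q x y : K} {m m'' : Bool} {w : List St} {s t : St}
    (h : stepWt q x y m m'' w s t ≠ 0) :
    ∃ m', Step m m' s.1 t.1 ∧ Step m' m'' s.2 t.2 := by
  refine ⟨(m || s.1) && !t.1, ?_⟩
  unfold stepWt at h
  have h := (ite_ne_right_iff.1 h).1
  obtain ⟨s₁, s₂⟩ := s
  obtain ⟨t₁, t₂⟩ := t
  revert h
  cases m <;> cases m'' <;> cases s₁ <;> cases s₂ <;> cases t₁ <;> cases t₂ <;> simp [Step]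

theorem win_end_iff (k : ℕ) (b : ℤ) (P₁ P₂ : Finset ℤ) (h₁ : ∀ p ∈ P₁, p < b)
    (h₂ : ∀ p ∈ P₂, p < b) :
    (∀ s ∈ win (k + 1) b P₁ P₂, s = (false, false)) ↔
      (∀ p ∈ P₁, p + ((k + 1 : ℕ) : ℤ) < b) ∧ ∀ p ∈ P₂, p + ((k + 1 : ℕ) : ℤ) < b := by
  unfold win
  simp only [List.mem_map, List.mem_range, forall_exists_index, and_imp,
    forall_apply_eq_imp_iff₂, stf, Prod.mk.injEq, decide_eq_false_iff_not]
  push_cast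
  have key : ∀ P : Finset ℤ, (∀ p ∈ P, p < b) →
      ((∀ i < k + 1, b - 1 - ((i : ℕ) : ℤ) ∉ P) ↔ ∀ p ∈ P, p + ((k : ℤ) + 1) < b) := by
    intro P hP
    constructor
    · intro h p hp
      by_contra hlt
      have h1 := hP p hp
      refine h (b - 1 - p).toNat (by omega) ?_
      rwa [show b - 1 - ((b - 1 - p).toNat : ℤ) = p by omega]
    · intro h i hi hp
      have := h _ hp
      omega
  rw [← key P₁ h₁, ← key P₂ h₂, ← forall₂_and]

/-- If the shapes are fixed then only compatible pairs of strips contribute, and the local weights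
multiply to the weight of the pair. -/
theorem prod_loc_eq (q x y : K) {k M : ℕ} {μ ν κ : YoungDiagram} {P₁ P₂ : Finset ℤ}
    (hμ : ∀ k : ℤ, ((M : ℤ) ≤ k → hgt μ k = 0) ∧ (k ≤ -M → hgt μ k = -k))
    (hν : ∀ k : ℤ, ((M : ℤ) ≤ k → hgt ν k = 0) ∧ (k ≤ -M → hgt ν k = -k))
    (hκ : ∀ k : ℤ, ((M : ℤ) ≤ k → hgt κ k = 0) ∧ (k ≤ -M → hgt κ k = -k))
    (h₁ : Valid (k + 1) μ ν P₁) (h₂ : Valid (k + 1) ν κ P₂) :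
    ∏ j ∈ Finset.Ico (-(M : ℤ)) (M + 1), loc q x y (mb μ) (mb κ) k j P₁ P₂ =
      (q ^ tilingSpin (tiles (k + 1) μ P₁) * x ^ P₁.card) *
        (q ^ tilingSpin (tiles (k + 1) ν P₂) * y ^ P₂.card) := by
  have hn : 1 ≤ k + 1 := Nat.succ_pos k
  have b₁ := valid_bound hn hμ hν h₁
  have b₂ := valid_bound hn hν hκ h₂
  have s₁ := (valid_iff hn b₁ (fun i hi => by rw [(hμ i).2 (by omega), (hν i).2 (by omega)])
    (fun i hi => by rw [(hμ i).1 (by omega), (hν i).1 (by omega)])).1 h₁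
  have s₂ := (valid_iff hn b₂ (fun i hi => by rw [(hν i).2 (by omega), (hκ i).2 (by omega)])
    (fun i hi => by rw [(hν i).1 (by omega), (hκ i).1 (by omega)])).1 h₂
  have hloc : ∀ j ∈ Finset.Ico (-(M : ℤ)) (M + 1), loc q x y (mb μ) (mb κ) k j P₁ P₂ =
      q ^ (((mb μ j).toNat + (decide (j ∈ P₁)).toNat) * near (k + 1) P₁ j +
        ((mb ν j).toNat + (decide (j ∈ P₂)).toNat) * near (k + 1) P₂ j) *
        x ^ (decide (j ∈ P₁)).toNat * y ^ (decide (j ∈ P₂)).toNat := by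
    intro j hj
    have e : j - ((k + 1 : ℕ) : ℤ) = j - 1 - k := by push_cast; ring
    have t₁ := s₁ j hj
    have t₂ := s₂ j hj
    rw [e] at t₁ t₂
    rw [loc, stepWt_eq q x y (mb μ j) (mb ν j) (mb κ j) _ _ _ t₁ t₂, countP_win_fst,
      countP_win_snd]
    rfl
  rw [Finset.prod_congr rfl hloc, Finset.prod_mul_distrib, Finset.prod_mul_distrib,
    Finset.prod_pow_eq_pow_sum, Finset.prod_pow_eq_pow_sum, Finset.prod_pow_eq_pow_sum,
    Finset.sum_add_distrib,
    ← spin_tiles hn h₁ (fun p hp => ⟨(b₁ p hp).1, (b₁ p hp).2.le⟩),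
    ← spin_tiles hn h₂ (fun p hp => ⟨(b₂ p hp).1, (b₂ p hp).2.le⟩),
    ← card_eq_sum, ← card_eq_sum, pow_add]
  · ring
  · intro p hp
    have := b₂ p hp
    rw [Finset.mem_Ico]; omega
  · intro p hp
    have := b₁ p hp
    rw [Finset.mem_Ico]; omega

/-- If all local weights are nonzero then there is an intermediate shape. -/
theorem exists_middle {q x y : K} {k M : ℕ} {μ κ : YoungDiagram} {P₁ P₂ : Finset ℤ}
    (hμ : ∀ k : ℤ, ((M : ℤ) ≤ k → hgt μ k = 0) ∧ (k ≤ -M → hgt μ k = -k))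
    (hκ : ∀ k : ℤ, ((M : ℤ) ≤ k → hgt κ k = 0) ∧ (k ≤ -M → hgt κ k = -k))
    (b₁ : ∀ p ∈ P₁, -(M : ℤ) ≤ p ∧ p + ((k + 1 : ℕ) : ℤ) < M + 1)
    (b₂ : ∀ p ∈ P₂, -(M : ℤ) ≤ p ∧ p + ((k + 1 : ℕ) : ℤ) < M + 1)
    (h : ∀ j ∈ Finset.Ico (-(M : ℤ)) (M + 1), loc q x y (mb μ) (mb κ) k j P₁ P₂ ≠ 0) :
    ∃ ν, Valid (k + 1) μ ν P₁ ∧ Valid (k + 1) ν κ P₂ := by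
  have hn : 1 ≤ k + 1 := Nat.succ_pos k
  have hs : ∀ j ∈ Finset.Ico (-(M : ℤ)) (M + 1), ∃ m',
      Step (mb μ j) m' (decide (j - ((k + 1 : ℕ) : ℤ) ∈ P₁)) (decide (j ∈ P₁)) ∧
      Step m' (mb κ j) (decide (j - ((k + 1 : ℕ) : ℤ) ∈ P₂)) (decide (j ∈ P₂)) := by
    intro j hj
    have e : j - ((k + 1 : ℕ) : ℤ) = j - 1 - k := by push_cast; ring
    rw [e]
    exact stepWt_ne_zero (h j hj)
  set g : ℤ → ℤ := fun i => hgt μ i + cov (k + 1) P₁ i with hg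
  -- the bits of `g`
  have hbit : ∀ j ∈ Finset.Ico (-(M : ℤ)) (M + 1), ∃ m' : Bool, (m'.toNat : ℤ) = g (j - 1) - g j ∧
      Step (mb μ j) m' (decide (j - ((k + 1 : ℕ) : ℤ) ∈ P₁)) (decide (j ∈ P₁)) ∧
      Step m' (mb κ j) (decide (j - ((k + 1 : ℕ) : ℤ) ∈ P₂)) (decide (j ∈ P₂)) := by
    intro j hj
    obtain ⟨m', h₁, h₂⟩ := hs j hj
    refine ⟨m', ?_, h₁, h₂⟩
    have i1 := congrArg (Nat.cast : ℕ → ℤ) h₁.2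
    have i2 := cov_step hn P₁ j
    rw [Nat.cast_add, Nat.cast_add] at i1
    rw [mb_toNat, decide_toNat, decide_toNat] at i1
    simp only [hg]
    omega
  have hgIs : IsHgt g := by
    intro i
    rcases lt_or_ge (i + 1) (-(M : ℤ)) with h1 | h1
    · simp only [hg]
      rw [cov_eq_zero b₁ (by omega), cov_eq_zero b₁ (by omega)]
      simpa using isHgt_hgt μ i
    rcases lt_or_ge (i + 1) (M + 1) with h2 | h2
    · obtain ⟨m', e, -⟩ := hbit (i + 1) (Finset.mem_Ico.2 ⟨h1, h2⟩)
      rw [add_sub_cancel_right] at e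
      have := m'.toNat_le
      omega
    · simp only [hg]
      rw [cov_eq_zero b₁ (by omega), cov_eq_zero b₁ (by omega)]
      simpa using isHgt_hgt μ i
  have hκg : ∀ i, hgt κ i = g i + cov (k + 1) P₂ i := by
    refine eq_add_cov hn b₂ (fun i hi => ?_) (fun i hi => ?_) fun j hj => ?_
    · simp only [hg]
      rw [cov_eq_zero b₁ (by omega), (hμ i).2 (by omega), (hκ i).2 (by omega), add_zero]
    · simp only [hg]
      rw [cov_eq_zero b₁ (by omega), (hμ i).1 (by omega), (hκ i).1 (by omega), add_zero]
    · obtain ⟨m', e, -, h₂⟩ := hbit j hj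
      have i1 := congrArg (Nat.cast : ℕ → ℤ) h₂.2
      rw [Nat.cast_add, Nat.cast_add] at i1
      rw [mb_toNat, decide_toNat, decide_toNat] at i1
      omega
  obtain ⟨ν, hν⟩ := exists_of_hgt κ g hgIs
    (fun i => (base_le_hgt μ i).trans (le_add_of_nonneg_right (cov_nonneg _ _ _)))
    (fun i => by rw [hκg]; exact le_add_of_nonneg_right (cov_nonneg _ _ _))
  have hbν : ∀ j, ((mb ν j).toNat : ℤ) = g (j - 1) - g j := by
    intro j; rw [mb_toNat, hν, hν]
  have hinj : ∀ m m' : Bool, (m.toNat : ℤ) = m'.toNat → m = m' := by decide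
  refine ⟨ν, ?_, ?_⟩
  · rw [valid_iff hn b₁]
    · intro j hj
      obtain ⟨m', e, h₁, -⟩ := hbit j hj
      rwa [hinj (mb ν j) m' (by rw [hbν, e])]
    · intro i hi
      rw [hν]
      simp only [hg]
      rw [cov_eq_zero b₁ (by omega), add_zero]
    · intro i hi
      rw [hν]
      simp only [hg]
      rw [cov_eq_zero b₁ (by omega), add_zero]
  · rw [valid_iff hn b₂]
    · intro j hj
      obtain ⟨m', e, -, h₂⟩ := hbit j hj
      rwa [hinj (mb ν j) m' (by rw [hbν, e])]
    · intro i hi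
      rw [hκg, hν, cov_eq_zero b₂ (by omega), add_zero]
    · intro i hi
      rw [hκg, hν, cov_eq_zero b₂ (by omega), add_zero]

noncomputable instance fintypeBelow (lam : YoungDiagram) : Fintype {ν : YoungDiagram // ν ≤ lam} :=
  Fintype.ofInjective
    (fun ν => (⟨ν.1.cells, Finset.mem_powerset.2 ν.2⟩ : {S // S ∈ lam.cells.powerset}))
    fun _ _ h => Subtype.ext (YoungDiagram.ext (congrArg Subtype.val h))

theorem sum_W_eq_Zrec (q x y : K) (k : ℕ) (lam : YoungDiagram) (μ κ : {ν // ν ≤ lam}) (M : ℕ)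
    (hM : ∀ ν ≤ lam, ∀ k : ℤ, ((M : ℤ) ≤ k → hgt ν k = 0) ∧ (k ≤ -M → hgt ν k = -k)) :
    ∑ ν : {ν // ν ≤ lam}, W (k + 1) q x μ.1 ν.1 * W (k + 1) q y ν.1 κ.1 =
      Zrec q x y (mb μ.1) (mb κ.1) (2 * M + 1) (-M) (List.replicate (k + 1) (false, false)) := by
  have hn : 1 ≤ k + 1 := Nat.succ_pos k
  have hw : List.replicate (k + 1) (false, false) = win (k + 1) (-(M : ℤ)) ∅ ∅ := by
    symm
    rw [List.eq_replicate_iff]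
    refine ⟨by simp [win], fun s hs => ?_⟩
    obtain ⟨i, -, rfl⟩ := List.mem_map.1 hs
    simp [stf]
  rw [hw, Zrec_eq_sum q x y _ _ k _ _ ∅ ∅ (by simp) (by simp)]
  have eb : -(M : ℤ) + ((2 * M + 1 : ℕ) : ℤ) = M + 1 := by push_cast; ring
  rw [eb]
  simp only [Finset.empty_union]
  have hE : ∀ (μ ν : {ν // ν ≤ lam}) (P : Finset ℤ), Valid (k + 1) μ.1 ν.1 P →
      P ⊆ Finset.Ico (-(M : ℤ)) (M + 1) := by
    intro μ ν P hP p hp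
    have := valid_bound hn (hM μ.1 μ.2) (hM ν.1 ν.2) hP p hp
    rw [Finset.mem_Ico]; omega
  have hW : ∀ ν : {ν // ν ≤ lam}, W (k + 1) q x μ.1 ν.1 * W (k + 1) q y ν.1 κ.1 =
      ∑ P₁ ∈ (Finset.Ico (-(M : ℤ)) (M + 1)).powerset,
      ∑ P₂ ∈ (Finset.Ico (-(M : ℤ)) (M + 1)).powerset,
        if Valid (k + 1) μ.1 ν.1 P₁ ∧ Valid (k + 1) ν.1 κ.1 P₂ then
          (q ^ tilingSpin (tiles (k + 1) μ.1 P₁) * x ^ P₁.card) *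
            (q ^ tilingSpin (tiles (k + 1) ν.1 P₂) * y ^ P₂.card) else 0 := by
    intro ν
    rw [W_eq_sum hn q x μ.1 ν.1 _ (hE μ ν), W_eq_sum hn q y ν.1 κ.1 _ (hE ν κ),
      Finset.sum_mul_sum]
    refine Finset.sum_congr rfl fun P₁ _ => Finset.sum_congr rfl fun P₂ _ => ?_
    by_cases h₁ : Valid (k + 1) μ.1 ν.1 P₁ <;> by_cases h₂ : Valid (k + 1) ν.1 κ.1 P₂ <;>
      simp [h₁, h₂]
  rw [Finset.sum_congr rfl fun ν _ => hW ν, Finset.sum_comm]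
  refine Finset.sum_congr rfl fun P₁ hP₁ => ?_
  rw [Finset.sum_comm]
  refine Finset.sum_congr rfl fun P₂ hP₂ => ?_
  rw [Finset.mem_powerset] at hP₁ hP₂
  have l₁ : ∀ p ∈ P₁, p < (M : ℤ) + 1 := fun p hp => (Finset.mem_Ico.1 (hP₁ hp)).2
  have l₂ : ∀ p ∈ P₂, p < (M : ℤ) + 1 := fun p hp => (Finset.mem_Ico.1 (hP₂ hp)).2
  by_cases hex : ∃ ν, Valid (k + 1) μ.1 ν P₁ ∧ Valid (k + 1) ν κ.1 P₂
  · obtain ⟨ν, h₁, h₂⟩ := hex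
    have hν : ν ≤ lam := h₂.le.trans κ.2
    rw [Finset.sum_eq_single ⟨ν, hν⟩, if_pos ⟨h₁, h₂⟩,
      prod_loc_eq q x y (hM _ μ.2) (hM ν hν) (hM _ κ.2) h₁ h₂, if_pos, mul_one]
    · rw [win_end_iff k _ _ _ l₁ l₂]
      exact ⟨fun p hp => (valid_bound hn (hM _ μ.2) (hM ν hν) h₁ p hp).2,
        fun p hp => (valid_bound hn (hM ν hν) (hM _ κ.2) h₂ p hp).2⟩
    · rintro ν' - hne
      refine if_neg fun h => hne (Subtype.ext (hgt_injective fun i => ?_))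
      rw [h.1.2, h₁.2]
    · intro h
      exact absurd (Finset.mem_univ _) h
  · rw [Finset.sum_eq_zero fun ν _ => if_neg fun h => hex ⟨ν.1, h⟩]
    symm
    by_contra hne
    have hne := mul_ne_zero_iff.1 hne
    have hend := (ite_ne_right_iff.1 hne.2).1
    rw [win_end_iff k _ _ _ l₁ l₂] at hend
    refine hex (exists_middle (q := q) (x := x) (y := y) (hM _ μ.2) (hM _ κ.2)
      (fun p hp => ⟨(Finset.mem_Ico.1 (hP₁ hp)).1, hend.1 p hp⟩)
      (fun p hp => ⟨(Finset.mem_Ico.1 (hP₂ hp)).1, hend.2 p hp⟩) ?_)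
    exact fun j hj => Finset.prod_ne_zero_iff.1 hne.1 j hj

/-- Two successive horizontal strips can exchange their weights. -/
theorem W_comm_field {q x y : K} (hq : q ≠ 0) (hx : x ≠ 0) (hy : y ≠ 0) {n : ℕ} (hn : 1 ≤ n)
    (lam : YoungDiagram) (μ κ : {ν // ν ≤ lam}) :
    ∑ ν : {ν // ν ≤ lam}, W n q x μ.1 ν.1 * W n q y ν.1 κ.1 =
      ∑ ν : {ν // ν ≤ lam}, W n q y μ.1 ν.1 * W n q x ν.1 κ.1 := by
  obtain ⟨k, rfl⟩ : ∃ k, n = k + 1 := ⟨n - 1, by omega⟩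
  obtain ⟨M, hM⟩ := exists_bound lam
  rw [sum_W_eq_Zrec q x y k lam μ κ M hM, sum_W_eq_Zrec q y x k lam μ κ M hM,
    Zrec_symm q x y hq hx hy]

/-! ### Ribbon tableaux as products of transfer matrices -/

/-- The tilings that make `ν/μ` a horizontal `n`-ribbon strip. -/
noncomputable def strips (n : ℕ) (μ ν : YoungDiagram) : Finset (Finset (Finset Cell)) :=
  if μ ≤ ν then (ν.cells \ μ.cells).powerset.powerset.filter
    (fun T => IsHStripTiling n (ν.cells \ μ.cells) T) else ∅

theorem mem_strips {n : ℕ} {μ ν : YoungDiagram} {T : Finset (Finset Cell)} :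
    T ∈ strips n μ ν ↔ μ ≤ ν ∧ IsHStripTiling n (ν.cells \ μ.cells) T := by
  unfold strips
  split_ifs with h
  · rw [mem_W_index]; exact (and_iff_right h).symm
  · exact iff_of_false (Finset.notMem_empty _) fun h' => h h'.1

theorem W_eq_sum_strips {R : Type*} [CommRing R] (n : ℕ) (q x : R) (μ ν : YoungDiagram) :
    W n q x μ ν = ∑ T ∈ strips n μ ν, q ^ tilingSpin T * x ^ T.card := by
  unfold W strips
  split_ifs <;> simp

theorem tableau_ext {n N : ℕ} {lam mu : YoungDiagram} {T T' : RibbonTableau n N lam mu}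
    (h₁ : T.chain = T'.chain) (h₂ : T.tiling = T'.tiling) : T = T' := by
  cases T; cases T'; simp_all

theorem chain_le {n N : ℕ} {lam mu : YoungDiagram} (T : RibbonTableau n N lam mu)
    (i : Fin (N + 1)) : T.chain i ≤ lam := by
  induction i using Fin.reverseInduction with
  | last => exact T.chain_last.le
  | cast i ih => exact (T.chain_mono i).trans ih

/-- The tableau obtained by removing the first strip. -/
def tailTab {n N : ℕ} {lam mu : YoungDiagram} (T : RibbonTableau n (N + 1) lam mu) :
    RibbonTableau n N lam (T.chain (Fin.succ 0)) where
  chain i := T.chain i.succ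
  chain_zero := rfl
  chain_last := T.chain_last
  chain_mono i := T.chain_mono i.succ
  tiling i := T.tiling i.succ
  tiling_strip i := T.tiling_strip i.succ

/-- The tableau obtained by adding a strip at the beginning. -/
def consTab {n N : ℕ} {lam mu ν : YoungDiagram} (t : Finset (Finset Cell)) (ht : t ∈ strips n mu ν)
    (T : RibbonTableau n N lam ν) : RibbonTableau n (N + 1) lam mu where
  chain := Fin.cons mu T.chain
  chain_zero := rfl
  chain_last := T.chain_last
  chain_mono i := by
    refine Fin.cases ?_ (fun i => ?_) i
    · show mu ≤ T.chain 0
      rw [T.chain_zero]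
      exact (mem_strips.1 ht).1
    · exact T.chain_mono i
  tiling := Fin.cons t T.tiling
  tiling_strip i := by
    refine Fin.cases ?_ (fun i => ?_) i
    · show IsHStripTiling n ((T.chain 0).cells \ mu.cells) t
      rw [T.chain_zero]
      exact (mem_strips.1 ht).2
    · exact T.tiling_strip i

theorem head_mem_strips {n N : ℕ} {lam mu : YoungDiagram} (T : RibbonTableau n (N + 1) lam mu) :
    T.tiling 0 ∈ strips n mu (T.chain (Fin.succ 0)) := by
  have h1 := T.chain_mono 0
  have h2 := T.tiling_strip 0
  have e : T.chain (Fin.castSucc 0) = mu := T.chain_zero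
  rw [e] at h1 h2
  exact mem_strips.2 ⟨h1, h2⟩

/-- A tableau with `N + 1` letters is a strip followed by a tableau with `N` letters. -/
noncomputable def tabEquiv (n N : ℕ) (lam mu : YoungDiagram) :
    RibbonTableau n (N + 1) lam mu ≃
      Σ ν : {ν : YoungDiagram // ν ≤ lam}, {t // t ∈ strips n mu ν.1} × RibbonTableau n N lam ν.1 where
  toFun T := ⟨⟨T.chain (Fin.succ 0), chain_le T _⟩, ⟨T.tiling 0, head_mem_strips T⟩, tailTab T⟩
  invFun T := consTab T.2.1.1 T.2.1.2 T.2.2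
  left_inv T := by
    refine tableau_ext ?_ ?_
    · funext i
      refine Fin.cases ?_ (fun i => ?_) i
      · exact T.chain_zero.symm
      · rfl
    · funext i
      refine Fin.cases ?_ (fun i => ?_) i <;> rfl
  right_inv := by
    rintro ⟨⟨ν, hν⟩, ⟨t, ht⟩, T⟩
    change RibbonTableau n N lam ν at T
    change t ∈ strips n mu ν at ht
    cases T with
    | mk c hc h1 h2 h3 h4 =>
      cases hc
      rfl

theorem finite_tab (n N : ℕ) (lam : YoungDiagram) : ∀ mu, Finite (RibbonTableau n N lam mu) := by
  induction N with
  | zero =>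
    intro mu
    have : Subsingleton (RibbonTableau n 0 lam mu) := by
      refine ⟨fun T T' => tableau_ext ?_ ?_⟩
      · funext i
        rw [Fin.fin_one_eq_zero i, T.chain_zero, T'.chain_zero]
      · funext i
        exact i.elim0
    infer_instance
  | succ N ih =>
    intro mu
    have := ih
    exact Finite.of_equiv _ (tabEquiv n N lam mu).symm

noncomputable instance fintypeTab (n N : ℕ) (lam mu : YoungDiagram) :
    Fintype (RibbonTableau n N lam mu) :=
  @Fintype.ofFinite _ (finite_tab n N lam mu)

/-- The generating function of ribbon tableaux, with arbitrary weights for the spin and for the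
letters. -/
noncomputable def F {R : Type*} [CommRing R] (n N : ℕ) (q : R) (x : Fin N → R)
    (lam mu : YoungDiagram) : R :=
  ∑ T : RibbonTableau n N lam mu, q ^ T.spin * ∏ i, x i ^ (T.tiling i).card

/-- The transfer matrix of horizontal strips, between the diagrams contained in `lam`. -/
noncomputable def A {R : Type*} [CommRing R] (n : ℕ) (q : R) (lam : YoungDiagram) (x : R) :
    Matrix {ν : YoungDiagram // ν ≤ lam} {ν : YoungDiagram // ν ≤ lam} R :=
  Matrix.of fun μ ν => W n q x μ.1 ν.1

theorem F_succ {R : Type*} [CommRing R] (n N : ℕ) (q : R) (x : Fin (N + 1) → R)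
    (lam mu : YoungDiagram) :
    F n (N + 1) q x lam mu = ∑ ν : {ν : YoungDiagram // ν ≤ lam},
      W n q (x 0) mu ν.1 * F n N q (fun i => x i.succ) lam ν.1 := by
  unfold F
  rw [← Equiv.sum_comp (tabEquiv n N lam mu).symm, Fintype.sum_sigma]
  refine Finset.sum_congr rfl fun ν _ => ?_
  rw [Fintype.sum_prod_type, W_eq_sum_strips,
    ← Finset.sum_coe_sort (strips n mu ν.1) (fun t => q ^ tilingSpin t * x 0 ^ t.card),
    Finset.sum_mul]
  refine Finset.sum_congr rfl fun t _ => ?_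
  rw [Finset.mul_sum]
  refine Finset.sum_congr rfl fun T _ => ?_
  have h1 : ((tabEquiv n N lam mu).symm ⟨ν, t, T⟩).spin = tilingSpin t.1 + T.spin := by
    unfold RibbonTableau.spin
    rw [Fin.sum_univ_succ]
    rfl
  rw [h1, Fin.prod_univ_succ]
  have h2 : ((tabEquiv n N lam mu).symm ⟨ν, t, T⟩).tiling 0 = t.1 := rfl
  have h3 : ∀ i : Fin N, ((tabEquiv n N lam mu).symm ⟨ν, t, T⟩).tiling i.succ = T.tiling i :=
    fun _ => rfl
  simp only [h2, h3, pow_add]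
  ring

theorem F_eq_prod {R : Type*} [CommRing R] (n : ℕ) (q : R) (lam : YoungDiagram) (N : ℕ) :
    ∀ (x : Fin N → R) (mu : {ν : YoungDiagram // ν ≤ lam}),
    F n N q x lam mu.1 = (List.ofFn fun i => A n q lam (x i)).prod mu ⟨lam, le_rfl⟩ := by
  induction N with
  | zero =>
    intro x mu
    rw [List.ofFn_zero, List.prod_nil, Matrix.one_apply]
    unfold F
    by_cases h : mu = ⟨lam, le_rfl⟩
    · rw [if_pos h]
      subst h
      let T₀ : RibbonTableau n 0 lam lam :=
        ⟨fun _ => lam, rfl, rfl, fun _ => le_rfl, fun _ => ∅, fun i => i.elim0⟩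
      rw [Fintype.sum_eq_single T₀]
      · simp [RibbonTableau.spin]
      · intro T hT
        refine absurd (tableau_ext ?_ ?_) hT
        · funext i
          rw [Fin.fin_one_eq_zero i, T.chain_zero, T₀.chain_zero]
        · funext i
          exact i.elim0
    · rw [if_neg h]
      refine Finset.sum_eq_zero fun T _ => absurd (Subtype.ext ?_) h
      exact T.chain_zero.symm.trans T.chain_last
  | succ N ih =>
    intro x mu
    rw [F_succ, List.ofFn_succ, List.prod_cons, Matrix.mul_apply]
    exact Finset.sum_congr rfl fun ν _ => by rw [ih]; rfl

theorem A_commute {N n : ℕ} (hn : 1 ≤ n) (lam : YoungDiagram) (i j : Fin N) :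
    Commute (A n (MvPolynomial.C Polynomial.X : MvPolynomial (Fin N) (Polynomial ℤ)) lam
        (MvPolynomial.X i))
      (A n (MvPolynomial.C Polynomial.X) lam (MvPolynomial.X j)) := by
  let f := algebraMap (MvPolynomial (Fin N) (Polynomial ℤ))
    (FractionRing (MvPolynomial (Fin N) (Polynomial ℤ)))
  have hf : Function.Injective f := IsFractionRing.injective _ _
  have h0 : ∀ a, a ≠ 0 → f a ≠ 0 := fun a ha h => ha (hf (h.trans (map_zero f).symm))
  ext1 μ κ
  rw [Matrix.mul_apply, Matrix.mul_apply]
  apply hf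
  simp only [A, Matrix.of_apply, map_sum, map_mul, map_W]
  refine W_comm_field (h0 _ ?_) (h0 _ (MvPolynomial.X_ne_zero i)) (h0 _ (MvPolynomial.X_ne_zero j))
    hn lam μ κ
  rw [Ne, MvPolynomial.C_eq_zero]
  exact Polynomial.X_ne_zero

theorem ribbonFn_eq_F (n N : ℕ) (lam mu : YoungDiagram) :
    ribbonFn n N lam mu = F n N (MvPolynomial.C Polynomial.X) MvPolynomial.X lam mu := by
  unfold ribbonFn F
  rw [finsum_eq_sum_of_fintype]
  refine Finset.sum_congr rfl fun T _ => ?_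
  rw [tableauTerm, map_pow]

theorem rename_F (n N : ℕ) (lam mu : YoungDiagram) (σ : Equiv.Perm (Fin N)) :
    MvPolynomial.rename (⇑σ)
      (F n N (MvPolynomial.C Polynomial.X : MvPolynomial (Fin N) (Polynomial ℤ))
        MvPolynomial.X lam mu) =
      F n N (MvPolynomial.C Polynomial.X) (fun i => MvPolynomial.X (σ i)) lam mu := by
  unfold F
  simp only [map_sum, map_mul, map_pow, map_prod, MvPolynomial.rename_C, MvPolynomial.rename_X]

end RibbonSym

/-- the ribbon function `𝒢_{λ/μ}(x₁,…,x_N;q)` is a symmetric polynomial. -/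
theorem ribbonFn_symmetric (n : ℕ) (hn : 1 ≤ n) (lam mu : YoungDiagram) (hsub : mu ≤ lam)
    (N : ℕ) (hN : 1 ≤ N) (σ : Equiv.Perm (Fin N)) :
    MvPolynomial.rename (⇑σ) (ribbonFn n N lam mu) = ribbonFn n N lam mu := by
  rw [RibbonSym.ribbonFn_eq_F, RibbonSym.rename_F,
    RibbonSym.F_eq_prod n _ lam N _ ⟨mu, hsub⟩, RibbonSym.F_eq_prod n _ lam N _ ⟨mu, hsub⟩]
  -- Both sides are entries of products of the same commuting matrices in different orders.
  have hperm := Equiv.Perm.ofFn_comp_perm σ fun i =>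
    RibbonSym.A n (MvPolynomial.C Polynomial.X : MvPolynomial (Fin N) (Polynomial ℤ)) lam
      (MvPolynomial.X i)
  have hprod := hperm.prod_eq' (List.pairwise_iff_get.2 fun a b _ => by
    rw [List.get_ofFn, List.get_ofFn]
    exact RibbonSym.A_commute hn lam _ _)
  exact congrFun (congrFun hprod _) _
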